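/- arXiv:1205.0873 — 3 statements merged into one kernel-verified Lean document; each statement's English description precedes it below -/
import Mathlib

section
/- Let X be a proper geodesic ptolemaic metric space and let A ⊆ X be a nonempty closed convex subset (convex meaning: for all x,y ∈ A, every midpoint of x and y belongs to A). Then there exists a continuous map π : X → A such that d(x, π(x)) = inf_{a ∈ A} d(x, a) for every x ∈ X. -/
open Metric Set Filter Topology

/-- A metric space is ptolemaic if all quadruples satisfy the Ptolemy inequality. -/
def Ptolemaic (X : Type*) [MetricSpace X] : Prop :=
  ∀ x y z w : X, dist x y * dist z w ≤ dist x z * dist y w + dist x w * dist y z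

/-- A metric space is geodesic if every pair of points is joined by a geodesic. -/
def GeodesicMetricSpace (X : Type*) [MetricSpace X] : Prop :=
  ∀ x y : X, ∃ c : ℝ → X, c 0 = x ∧ c 1 = y ∧
    ∀ s ∈ Set.Icc (0:ℝ) 1, ∀ t ∈ Set.Icc (0:ℝ) 1,
      dist (c s) (c t) = dist x y * |s - t|

/-- Midpoints exist in a geodesic metric space. -/
lemma exists_midpoint_of_geodesic {X : Type*} [MetricSpace X] (hgeo : GeodesicMetricSpace X)
    (x y : X) : ∃ m : X, dist x m = dist x y / 2 ∧ dist m y = dist x y / 2 := by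
  obtain ⟨c, h0, h1, hc⟩ := hgeo x y
  refine ⟨c (1/2), ?_, ?_⟩
  · have := hc 0 (by norm_num) (1/2) (by norm_num)
    rw [h0] at this
    rw [this, show |(0:ℝ) - 1/2| = 1/2 by norm_num [abs_of_neg]]
    ring
  · have := hc (1/2) (by norm_num) 1 (by norm_num)
    rw [h1] at this
    rw [this, show |(1/2:ℝ) - 1| = 1/2 by norm_num [abs_of_neg]]
    ring

/-- The key estimate, coming from two applications of the Ptolemy inequality. -/
lemma key_estimate {X : Type*} [MetricSpace X] (hPT : Ptolemaic X)
    {z x y m g w : X} {r L t : ℝ} (hr : 0 < r) (ht : 0 < t)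
    (hzy : dist y z = r) (hzm : r ≤ dist z m) (hxy : dist x y = L)
    (hxm : dist x m = L / 2) (hmy : dist m y = L / 2)
    (hxg : dist x g = t) (hgz : dist g z = r - t)
    (hgw : dist g w = dist g y / 2) (hwy : dist w y = dist g y / 2) (htL : t < L) :
    L / (2 * r) * (L - dist g y / 2) ≤ dist m w + t / 2 := by
  have p1 := hPT m g w x
  have p2 := hPT g y z m
  rw [dist_comm m x, hxm, hgw, dist_comm g x, hxg] at p1
  rw [hgz, dist_comm y m, hmy, hzy] at p2
  have t1 : L ≤ dist w x + dist g y / 2 := by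
    have := dist_triangle x w y
    rw [hxy, hwy, dist_comm x w] at this
    exact this
  have t2 : dist g y ≤ L + t := by
    have := dist_triangle g x y
    rw [hxy, dist_comm g x, hxg] at this
    linarith
  have t3 : L ≤ dist g y + t := by
    have := dist_triangle x g y
    rw [hxy, hxg] at this
    linarith
  rw [dist_comm m g] at p1
  set D := dist g y
  set D1 := dist g m
  set η := dist m w
  have hD : 0 ≤ D := dist_nonneg
  have hD1 : 0 ≤ D1 := dist_nonneg
  have q2 : D - L / 2 + t * (L / (2 * r)) ≤ D1 := by
    have h : D * r ≤ (r - t) * (L / 2) + D1 * r :=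
      (mul_le_mul_of_nonneg_left hzm hD).trans p2
    have : (D - L / 2 + t * (L / (2 * r))) * r ≤ D1 * r := by
      field_simp
      linarith
    exact le_of_mul_le_mul_right this hr
  have hpos : 0 ≤ L - D / 2 := by linarith
  have q3 : (D - L / 2 + t * (L / (2 * r))) * (L - D / 2) ≤ L / 2 * (D / 2) + η * t := by
    calc _ ≤ D1 * (L - D / 2) := mul_le_mul_of_nonneg_right q2 hpos
      _ ≤ D1 * dist w x := mul_le_mul_of_nonneg_left (by linarith) hD1
      _ ≤ _ := by linarith
  have q4 : (D - L) ^ 2 ≤ t ^ 2 := sq_le_sq' (by linarith) (by linarith)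
  have q5 : (L / (2 * r) * (L - D / 2)) * t ≤ (η + t / 2) * t := by
    nlinarith
  exact le_of_mul_le_mul_right q5 ht

/-- Nearest points in convex sets are unique. -/
lemma nearest_unique {X : Type*} [MetricSpace X] [ProperSpace X]
    (hPT : Ptolemaic X) (hgeo : GeodesicMetricSpace X) (A : Set X)
    (hconv : ∀ x ∈ A, ∀ y ∈ A, ∀ m : X,
      dist x m = dist x y / 2 → dist m y = dist x y / 2 → m ∈ A)
    {z x y : X} (hx : x ∈ A) (hy : y ∈ A)
    (hzx : dist z x = Metric.infDist z A) (hzy : dist z y = Metric.infDist z A) : x = y := by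
  by_contra hne
  have hL : 0 < dist x y := dist_pos.2 hne
  set r := Metric.infDist z A with hrdef
  have hr : 0 < r := by
    rcases (Metric.infDist_nonneg : 0 ≤ Metric.infDist z A).lt_or_eq with h | h
    · exact h
    · exfalso
      apply hne
      have h1 : dist z x = 0 := by rw [hzx, hrdef, ← h]
      have h2 : dist z y = 0 := by rw [hzy, hrdef, ← h]
      rw [← dist_eq_zero.1 h1, ← dist_eq_zero.1 h2]
  obtain ⟨c, h0, h1, hc⟩ := hgeo x z
  rw [dist_comm x z, hzx] at hc
  choose mid hmid1 hmid2 using exists_midpoint_of_geodesic hgeo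
  let ε : ℕ → ℝ := fun n => 1 / ((n : ℝ) + 1)
  have hε0 : ∀ n, 0 < ε n := fun n => by positivity
  have hε1 : ∀ n, ε n ≤ 1 := fun n => by
    have : (0:ℝ) ≤ n := Nat.cast_nonneg n
    exact (div_le_one (by positivity)).2 (by linarith)
  have hεlim : Tendsto ε atTop (𝓝 0) := tendsto_one_div_add_atTop_nhds_zero_nat
  have hxg : ∀ n, dist x (c (ε n)) = r * ε n := fun n => by
    have := hc 0 (by norm_num) (ε n) ⟨(hε0 n).le, hε1 n⟩
    rw [h0] at this
    rw [this, zero_sub, abs_neg, abs_of_pos (hε0 n)]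
  have hgz : ∀ n, dist (c (ε n)) z = r - r * ε n := fun n => by
    have := hc (ε n) ⟨(hε0 n).le, hε1 n⟩ 1 (by norm_num)
    rw [h1] at this
    rw [this, abs_of_nonpos (by linarith [hε1 n])]
    ring
  have htlim : Tendsto (fun n => r * ε n) atTop (𝓝 0) := by
    simpa using hεlim.const_mul r
  have hglim : Tendsto (fun n => c (ε n)) atTop (𝓝 x) := by
    rw [tendsto_iff_dist_tendsto_zero]
    refine htlim.congr fun n => ?_
    rw [dist_comm, hxg]
  let w : ℕ → X := fun n => mid (c (ε n)) y
  have hDlim : Tendsto (fun n => dist (c (ε n)) y) atTop (𝓝 (dist x y)) :=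
    hglim.dist tendsto_const_nhds
  have hbd : ∀ n, w n ∈ Metric.closedBall y ((r + dist x y) / 2) := fun n => by
    rw [Metric.mem_closedBall, hmid2]
    have := dist_triangle (c (ε n)) x y
    rw [dist_comm (c (ε n)) x, hxg] at this
    have : r * ε n ≤ r * 1 := mul_le_mul_of_nonneg_left (hε1 n) hr.le
    linarith
  obtain ⟨m, -, φ, hφ, hm⟩ :=
    (isCompact_closedBall y ((r + dist x y) / 2)).tendsto_subseq hbd
  have hφ' := hφ.tendsto_atTop
  have hxm : dist x m = dist x y / 2 := by
    have a := (hglim.comp hφ').dist hm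
    have b := (hDlim.comp hφ').div_const 2
    refine tendsto_nhds_unique a (b.congr fun n => ?_)
    simp only [Function.comp, w, hmid1]
  have hmy : dist m y = dist x y / 2 := by
    have a := hm.dist (tendsto_const_nhds (x := y))
    have b := (hDlim.comp hφ').div_const 2
    refine tendsto_nhds_unique a (b.congr fun n => ?_)
    simp only [Function.comp, w, hmid2]
  have hmA : m ∈ A := hconv x hx y hy m hxm hmy
  have hzm : r ≤ dist z m := Metric.infDist_le_dist_of_mem hmA
  have hev : ∀ᶠ n in atTop, r * ε (φ n) < dist x y :=
    (htlim.comp hφ').eventually_lt_const hL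
  have hlim1 : Tendsto (fun n => dist x y / (2 * r) * (dist x y - dist (c (ε (φ n))) y / 2)) atTop
      (𝓝 (dist x y / (2 * r) * (dist x y - dist x y / 2))) :=
    (tendsto_const_nhds.sub ((hDlim.comp hφ').div_const 2)).const_mul _
  have hlim2 : Tendsto (fun n => dist m (w (φ n)) + r * ε (φ n) / 2) atTop
      (𝓝 (dist m m + 0 / 2)) :=
    (tendsto_const_nhds.dist hm).add ((htlim.comp hφ').div_const 2)
  have hle := le_of_tendsto_of_tendsto hlim1 hlim2 (by
    filter_upwards [hev] with n hn
    exact key_estimate hPT hr (mul_pos hr (hε0 _)) (by rw [dist_comm, hzy]) hzm rfl hxm hmy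
      (hxg _) (hgz _) (hmid1 _ _) (hmid2 _ _) hn)
  rw [dist_self] at hle
  have : 0 < dist x y / (2 * r) * (dist x y - dist x y / 2) :=
    mul_pos (by positivity) (by linarith)
  linarith

/-- **Continuous nearest-point projection onto a closed convex subset of a
proper geodesic PT space.** -/
theorem continuous_projection_onto_closed_convex
    (X : Type*) [MetricSpace X] [ProperSpace X]
    (hPT : Ptolemaic X) (hgeo : GeodesicMetricSpace X)
    (A : Set X) (hne : A.Nonempty) (hclosed : IsClosed A)
    (hconv : ∀ x ∈ A, ∀ y ∈ A, ∀ m : X,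
      dist x m = dist x y / 2 → dist m y = dist x y / 2 → m ∈ A) :
    ∃ π : X → A, Continuous π ∧
      ∀ x : X, dist x (π x : X) = Metric.infDist x A := by
  have hex : ∀ x : X, ∃ a : A, dist x (a : X) = Metric.infDist x A := fun x => by
    obtain ⟨a, ha, h⟩ := hclosed.exists_infDist_eq_dist hne x
    exact ⟨⟨a, ha⟩, h.symm⟩
  choose π hπ using hex
  refine ⟨π, ?_, hπ⟩
  rw [continuous_induced_rng, continuous_iff_seqContinuous]
  intro u x hu
  refine tendsto_of_subseq_tendsto fun ns hns => ?_
  have hu' := hu.comp hns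
  have hb : ∀ᶠ n in atTop, ((π (u (ns n)) : X)) ∈
      Metric.closedBall x (1 + (1 + Metric.infDist x A)) := by
    filter_upwards [hu'.eventually (Metric.ball_mem_nhds x one_pos)] with n hn
    have hn' : dist (u (ns n)) x < 1 := hn
    rw [Metric.mem_closedBall]
    have h1 := dist_triangle (π (u (ns n)) : X) (u (ns n)) x
    have h2 := hπ (u (ns n))
    rw [dist_comm] at h2
    have h3 := Metric.infDist_le_infDist_add_dist (s := A) (x := u (ns n)) (y := x)
    linarith
  obtain ⟨p, -, φ, hφ, hp⟩ :=
    (isCompact_closedBall x (1 + (1 + Metric.infDist x A))).tendsto_subseq' hb.frequently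
  refine ⟨φ, ?_⟩
  have hpA : p ∈ A := hclosed.mem_of_tendsto hp (Eventually.of_forall fun n => (π _).2)
  have hu'' := hu'.comp hφ.tendsto_atTop
  have hpd : dist x p = Metric.infDist x A := by
    refine tendsto_nhds_unique (hu''.dist hp)
      ((((Metric.continuous_infDist_pt A).tendsto x).comp hu'').congr fun n => ?_)
    exact (hπ _).symm
  have : p = π x := nearest_unique hPT hgeo A hconv hpA (π x).2 hpd (hπ x)
  rw [this] at hp
  exact hp
end

section
/- Let X be a proper geodesic ptolemaic metric space. Then for all x,y ∈ X there exists a unique geodesic c_{xy} : [0,1] → X with c_{xy}(0) = x, c_{xy}(1) = y and d(c_{xy}(s), c_{xy}(t)) = |s−t|·d(x,y) for all s,t ∈ [0,1]; moreover the map X × X × [0,1] → X, (x,y,t) ↦ c_{xy}(t), is continuous. -/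
open Metric Set Filter Topology

/-- `c` is the (affinely parametrized) geodesic on `[0,1]` from `x` to `y`. -/
def IsGeodesicFromTo {X : Type*} [MetricSpace X]
    (x y : X) (c : Set.Icc (0:ℝ) 1 → X) : Prop :=
  c ⟨0, by norm_num⟩ = x ∧ c ⟨1, by norm_num⟩ = y ∧
    ∀ s t : Set.Icc (0:ℝ) 1, dist (c s) (c t) = |(s : ℝ) - (t : ℝ)| * dist x y

/-- Second differences summed over a family of kinks contradict Lipschitz + convex. -/
lemma kink_contradiction (Φ : ℝ → ℝ) (K η : ℝ) (hη : 0 < η)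
    (hconv : ∀ s t r : ℝ, 0 ≤ s → s ≤ t → t ≤ r → r ≤ 1 →
      Φ t * (r - s) ≤ Φ s * (r - t) + Φ r * (t - s))
    (hlip : ∀ s t : ℝ, 0 ≤ s → s ≤ t → t ≤ 1 → |Φ t - Φ s| ≤ K * (t - s))
    (u : ℕ → ℝ) (hu : StrictMono u) (hu01 : ∀ n, 0 < u n ∧ u n < 1)
    (hk : ∀ n, ∃ δ > 0, ∀ h, 0 < h → h < δ → 0 ≤ u n - h → u n + h ≤ 1 →
      η * h ≤ Φ (u n + h) + Φ (u n - h) - 2 * Φ (u n)) : False := by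
  have key : ∀ n : ℕ, ∀ t, u n < t → t ≤ 1 → (n * η - K) * (t - u n) ≤ Φ t - Φ (u n) := by
    intro n
    induction n with
    | zero =>
      intro t ht ht1
      have := (abs_le.1 (hlip (u 0) t (hu01 0).1.le ht.le ht1)).1
      simp only [Nat.cast_zero, zero_mul, zero_sub]
      linarith
    | succ n ih =>
      intro t ht ht1
      have hlt : u n < u (n+1) := hu (Nat.lt_succ_self n)
      obtain ⟨δ, hδ, hd⟩ := hk (n+1)
      have h0 := hu01 n
      have h1 := hu01 (n+1)
      set v := u (n+1) with hv
      obtain ⟨h, hh0, hh⟩ : ∃ h, 0 < h ∧ h < min δ (min (v - u n) (t - v)) :=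
        exists_between (lt_min hδ (lt_min (by linarith) (by linarith)))
      have e1 : h < δ := lt_of_lt_of_le hh (min_le_left _ _)
      have e2 : h < v - u n :=
        lt_of_lt_of_le hh ((min_le_right _ _).trans (min_le_left _ _))
      have e3 : h < t - v :=
        lt_of_lt_of_le hh ((min_le_right _ _).trans (min_le_right _ _))
      have hd' := hd h hh0 e1 (by linarith) (by linarith)
      have ihv := ih v hlt (by linarith)
      have c1 := hconv (u n) (v - h) v h0.1.le (by linarith) (by linarith) h1.2.le
      have c2 := hconv v (v + h) t h1.1.le (by linarith) (by linarith) ht1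
      -- left slope
      have l1 : (n * η - K) * h ≤ Φ v - Φ (v - h) := by
        have hp : 0 < v - u n := by linarith
        have : (n * η - K) * h * (v - u n) ≤ (Φ v - Φ (v - h)) * (v - u n) := by
          have := mul_le_mul_of_nonneg_right ihv hh0.le
          nlinarith
        exact le_of_mul_le_mul_right this hp
      have l2 : ((n + 1 : ℝ) * η - K) * h ≤ Φ (v + h) - Φ v := by nlinarith
      have : ((n + 1 : ℝ) * η - K) * (t - v) * h ≤ (Φ t - Φ v) * h := by
        have := mul_le_mul_of_nonneg_right l2 (show 0 ≤ t - v by linarith)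
        nlinarith
      push_cast
      exact le_of_mul_le_mul_right this hh0
  obtain ⟨n, hn⟩ := exists_nat_gt (2 * K / η)
  have h1 := hu01 n
  have k1 := key n 1 h1.2 le_rfl
  have k2 := (abs_le.1 (hlip (u n) 1 h1.1.le h1.2.le le_rfl)).2
  rw [div_lt_iff₀ hη] at hn
  have hp : 0 < 1 - u n := by linarith
  have : (n * η - K) * (1 - u n) ≤ K * (1 - u n) := by linarith
  have := le_of_mul_le_mul_right this hp
  linarith

/-- A geodesic parametrised on `[0,1]`, as a function on the reals. -/
def GeoR {X : Type*} [MetricSpace X] (x y : X) (c : ℝ → X) : Prop :=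
  c 0 = x ∧ c 1 = y ∧ ∀ s ∈ Set.Icc (0:ℝ) 1, ∀ t ∈ Set.Icc (0:ℝ) 1,
      dist (c s) (c t) = dist x y * |s - t|

section
variable {X : Type*} [MetricSpace X]

lemma GeoR.dist_of_le {x y : X} {c : ℝ → X} (hc : GeoR x y c) {s t : ℝ} (h0 : 0 ≤ s) (h : s ≤ t)
    (h1 : t ≤ 1) : dist (c s) (c t) = dist x y * (t - s) := by
  rw [hc.2.2 s ⟨h0, by linarith⟩ t ⟨by linarith, h1⟩, abs_sub_comm, abs_of_nonneg (by linarith)]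

lemma GeoR.dist_of_le' {x y : X} {c : ℝ → X} (hc : GeoR x y c) {s t : ℝ} (h0 : 0 ≤ s) (h : s ≤ t)
    (h1 : t ≤ 1) : dist (c t) (c s) = dist x y * (t - s) := by
  rw [dist_comm, hc.dist_of_le h0 h h1]

lemma GeoR.dist_left {x y : X} {c : ℝ → X} (hc : GeoR x y c) {t : ℝ} (h0 : 0 ≤ t)
    (h1 : t ≤ 1) : dist x (c t) = dist x y * t := by
  have := hc.dist_of_le le_rfl h0 h1
  rwa [hc.1, sub_zero] at this

lemma GeoR.dist_right {x y : X} {c : ℝ → X} (hc : GeoR x y c) {t : ℝ} (h0 : 0 ≤ t)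
    (h1 : t ≤ 1) : dist y (c t) = dist x y * (1 - t) := by
  have := hc.dist_of_le' h0 h1 le_rfl
  rwa [hc.2.1] at this

/-- Distance functions are convex along geodesics. -/
lemma GeoR.convex (hPT : Ptolemaic X) {x y : X} {c : ℝ → X} (hc : GeoR x y c)
    (hL : 0 < dist x y) (z : X)
    {s t r : ℝ} (h0 : 0 ≤ s) (h1 : s ≤ t) (h2 : t ≤ r) (h3 : r ≤ 1) :
    dist z (c t) * (r - s) ≤ dist z (c s) * (r - t) + dist z (c r) * (t - s) := by
  have := hPT z (c t) (c s) (c r)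
  rw [hc.dist_of_le h0 (h1.trans h2) h3, hc.dist_of_le (h0.trans h1) h2 h3,
    hc.dist_of_le' h0 h1 (h2.trans h3)] at this
  refine le_of_mul_le_mul_left ?_ hL
  linarith

lemma GeoR.lip {x y : X} {c : ℝ → X} (hc : GeoR x y c) (z : X)
    {s t : ℝ} (h0 : 0 ≤ s) (h1 : s ≤ t) (h2 : t ≤ 1) :
    |dist z (c t) - dist z (c s)| ≤ dist x y * (t - s) := by
  rw [← hc.dist_of_le h0 h1 h2, dist_comm (c s), dist_comm z, dist_comm z]
  exact abs_dist_sub_le _ _ _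

/-- Changing the target of a second difference costs little. -/
lemma GeoR.second_diff (hPT : Ptolemaic X) {x y : X} {c : ℝ → X} (hc : GeoR x y c) (m z : X)
    {u h : ℝ} (hh : 0 < h) (h0 : 0 ≤ u - h) (h1 : u + h ≤ 1) :
    dist m (c u) * (dist m (c (u + h)) + dist m (c (u - h)) - 2 * dist m (c u))
      - 4 * dist m z * (dist x y * h) ≤
    dist m (c u) * (dist z (c (u + h)) + dist z (c (u - h)) - 2 * dist z (c u)) := by
  have p1 := hPT m (c (u + h)) (c u) z
  have p2 := hPT m (c (u - h)) (c u) z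
  rw [dist_comm (c u) z, dist_comm (c (u+h)) z, hc.dist_of_le' (by linarith) (by linarith) h1] at p1
  rw [dist_comm (c u) z, dist_comm (c (u-h)) z, hc.dist_of_le h0 (by linarith) (by linarith)] at p2
  have l1 := (abs_le.1 (hc.lip m (s := u) (t := u + h) (by linarith) (by linarith) h1)).2
  have l2 := (abs_le.1 (hc.lip m (s := u - h) (t := u) h0 (by linarith) (by linarith))).1
  have l1' := (abs_le.1 (hc.lip m (s := u) (t := u + h) (by linarith) (by linarith) h1)).1
  have l2' := (abs_le.1 (hc.lip m (s := u - h) (t := u) h0 (by linarith) (by linarith))).2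
  ring_nf at l1 l2 l1' l2' p1 p2 ⊢
  have t1 : dist m (c u) - dist m z ≤ dist z (c u) := by
    linarith [dist_triangle m z (c u)]
  have t2 : dist z (c u) - dist m z ≤ dist m (c u) := by
    linarith [dist_triangle z m (c u), dist_comm z m]
  set Δ := dist m (c (u + h)) + dist m (c (u - h)) - 2 * dist m (c u) with hΔ
  have hΔu : Δ ≤ 2 * (dist x y * h) := by rw [hΔ]; linarith
  have hΔl : -(2 * (dist x y * h)) ≤ Δ := by rw [hΔ]; linarith
  have hε := dist_nonneg (x := m) (y := z)
  have q : (dist m (c u) - dist z (c u)) * Δ ≤ dist m z * (2 * (dist x y * h)) := by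
    have : |(dist m (c u) - dist z (c u)) * Δ| ≤ dist m z * (2 * (dist x y * h)) := by
      rw [abs_mul]
      exact mul_le_mul (abs_le.2 ⟨by linarith, by linarith⟩) (abs_le.2 ⟨hΔl, hΔu⟩) (abs_nonneg _) hε
    exact (abs_le.1 this).2
  rw [hΔ] at q
  ring_nf at q
  linarith

lemma kink_arith {A A' B B' g l : ℝ} (hg : 0 ≤ g) (hl : 0 ≤ l) (h1 : 2 * g ≤ A' + A)
    (h2 : 2 * g ≤ B' + B) (h3 : |A - A'| ≤ 2 * l) (h4 : |B - B'| ≤ 2 * l) :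
    2 * g ^ 2 - 2 * l ^ 2 ≤ A * B + A' * B' := by
  have t1 : |(A - A') * (B - B')| ≤ (2 * l) * (2 * l) := by
    rw [abs_mul]
    exact mul_le_mul h3 h4 (abs_nonneg _) (by linarith)
  have t1' := (abs_le.1 t1).1
  have t2 : (2 * g) * (2 * g) ≤ (A' + A) * (B' + B) :=
    mul_le_mul h1 h2 (by linarith) (by linarith)
  linarith

/-- Along two geodesics with the same ends, the midpoint function has a kink. -/
lemma kink (hPT : Ptolemaic X) {x y : X} {c e : ℝ → X} (hc : GeoR x y c) (he : GeoR x y e)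
    (hL : 0 < dist x y) {u h : ℝ} (hh : 0 < h) (h0 : 0 < u - h) (h1 : u + h < 1)
    (m : X) (hmx : dist x m = dist x y * u) (hmy : dist y m = dist x y * (1 - u))
    (hg : 0 < dist (c u) (e u)) :
    (1 + h) * (2 * dist (c u) (e u) ^ 2 - 4 * (dist x y * h) ^ 2) ≤ dist (c u) (e u) *
    ((dist m (c (u + h)) + dist m (c (u - h))) + (dist m (e (u + h)) + dist m (e (u - h)))) := by
  set L := dist x y with hLdef
  have p1 := hPT x m (c (u - h)) (e (u - h))
  have p2 := hPT y m (c (u + h)) (e (u + h))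
  rw [hmx, hc.dist_left (by linarith) (by linarith), he.dist_left (by linarith) (by linarith)] at p1
  rw [hmy, hc.dist_right (by linarith) (by linarith), he.dist_right (by linarith) (by linarith)] at p2
  rw [← hLdef] at p1 p2
  set G1 := dist (c (u - h)) (e (u - h)) with hG1
  set G2 := dist (c (u + h)) (e (u + h)) with hG2
  have hG1n : 0 ≤ G1 := dist_nonneg
  have hG2n : 0 ≤ G2 := dist_nonneg
  set S1 := dist m (c (u - h)) + dist m (e (u - h)) with hS1
  set S2 := dist m (c (u + h)) + dist m (e (u + h)) with hS2
  have p1' : u * G1 ≤ (u - h) * S1 := by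
    refine le_of_mul_le_mul_left ?_ hL
    rw [hS1]; linarith
  have p2' : (1 - u) * G2 ≤ (1 - u - h) * S2 := by
    refine le_of_mul_le_mul_left ?_ hL
    rw [hS2]; linarith
  have s1 : (1 + h) * G1 ≤ S1 := by
    refine le_of_mul_le_mul_left ?_ h0
    refine le_trans ?_ p1'
    have : (u - h) * (1 + h) ≤ u := by nlinarith
    nlinarith
  have s2 : (1 + h) * G2 ≤ S2 := by
    refine le_of_mul_le_mul_left ?_ (show 0 < 1 - u - h by linarith)
    refine le_trans ?_ p2'
    have : (1 - u - h) * (1 + h) ≤ 1 - u := by nlinarith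
    nlinarith
  set g := dist (c u) (e u) with hgdef
  -- mixed Ptolemy
  have q1 := hPT (c (u + h)) (e u) (c u) (e (u + h))
  have q2 := hPT (c (u - h)) (e u) (c u) (e (u - h))
  rw [hc.dist_of_le' (by linarith) (by linarith) h1.le,
    he.dist_of_le (by linarith) (by linarith) h1.le, dist_comm (e u) (c u)] at q1
  rw [hc.dist_of_le h0.le (by linarith) (by linarith),
    he.dist_of_le' h0.le (by linarith) (by linarith), dist_comm (e u) (c u)] at q2
  have a1 := hc.convex hPT hL (e u) (s := u - h) (t := u) (r := u + h) h0.le (by linarith)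
    (by linarith) h1.le
  have a2 := he.convex hPT hL (c u) (s := u - h) (t := u) (r := u + h) h0.le (by linarith)
    (by linarith) h1.le
  have b1 := abs_le.1 (hc.lip (e u) (s := u) (t := u + h) (by linarith) (by linarith) h1.le)
  have b2 := abs_le.1 (he.lip (c u) (s := u) (t := u + h) (by linarith) (by linarith) h1.le)
  have b3 := abs_le.1 (hc.lip (e u) (s := u - h) (t := u) h0.le (by linarith) (by linarith))
  have b4 := abs_le.1 (he.lip (c u) (s := u - h) (t := u) h0.le (by linarith) (by linarith))
  rw [dist_comm (e u) (c u), dist_comm (e u)] at b1 b3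
  rw [dist_comm (e u) (c u), dist_comm (e u), dist_comm (e u)] at a1
  rw [← hgdef, ← hLdef] at *
  rw [← hG2] at q1
  rw [← hG1] at q2
  set A := dist (c (u + h)) (e u)
  set B := dist (c u) (e (u + h))
  set A' := dist (c (u - h)) (e u) with hA'
  set B' := dist (c u) (e (u - h)) with hB'
  have hA'n : 0 ≤ A' := dist_nonneg
  have hB'n : 0 ≤ B' := dist_nonneg
  have a1' : 2 * g ≤ A' + A := by
    refine le_of_mul_le_mul_left ?_ hh
    linarith
  have a2' : 2 * g ≤ B' + B := by
    refine le_of_mul_le_mul_left ?_ hh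
    linarith
  have e1 : u + h - u = h := by ring
  have e2 : u - (u - h) = h := by ring
  rw [e1] at b1 b2 q1
  rw [e2] at b3 b4 q2
  have main : 2 * g ^ 2 - 4 * (L * h) ^ 2 ≤ g * (G1 + G2) := by
    have r1 := kink_arith (A := A) (A' := A') (B := B) (B' := B') (g := g) (l := L * h)
      hg.le (by positivity) a1' a2'
      (abs_le.2 ⟨by linarith [b1.1, b3.1], by linarith [b1.2, b3.2]⟩)
      (abs_le.2 ⟨by linarith [b2.1, b4.1], by linarith [b2.2, b4.2]⟩)
    linarith
  have : (1 + h) * (g * (G1 + G2)) ≤ g * (S1 + S2) := by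
    have := mul_le_mul_of_nonneg_left (add_le_add s1 s2) hg.le
    nlinarith
  calc (1 + h) * (2 * g ^ 2 - 4 * (L * h) ^ 2) ≤ (1 + h) * (g * (G1 + G2)) :=
        mul_le_mul_of_nonneg_left main (by linarith)
    _ ≤ g * (S1 + S2) := this
    _ = _ := by rw [hS1, hS2]; ring

/-- Midpoints of points at the same height stay at this height. -/
lemma exists_mid (hPT : Ptolemaic X) (hgeo : GeodesicMetricSpace X) {x y : X} {c e : ℝ → X}
    (hc : GeoR x y c) (he : GeoR x y e) {u : ℝ} (h0 : 0 ≤ u) (h1 : u ≤ 1)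
    (hne : 0 < dist (c u) (e u)) :
    ∃ m : X, dist x m = dist x y * u ∧ dist y m = dist x y * (1 - u) ∧
      dist m (c u) = dist (c u) (e u) / 2 ∧ dist m (e u) = dist (c u) (e u) / 2 := by
  obtain ⟨k, hk⟩ := hgeo (c u) (e u)
  have hk : GeoR (c u) (e u) k := hk
  have m1 := hk.dist_left (t := 1/2) (by norm_num) (by norm_num)
  have m2 := hk.dist_right (t := 1/2) (by norm_num) (by norm_num)
  have v1 := hk.convex hPT hne x (s := 0) (t := 1/2) (r := 1) (by norm_num) (by norm_num)
    (by norm_num) (by norm_num)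
  have v2 := hk.convex hPT hne y (s := 0) (t := 1/2) (r := 1) (by norm_num) (by norm_num)
    (by norm_num) (by norm_num)
  rw [hk.1, hk.2.1, hc.dist_left h0 h1, he.dist_left h0 h1] at v1
  rw [hk.1, hk.2.1, hc.dist_right h0 h1, he.dist_right h0 h1] at v2
  have tr := dist_triangle x (k (1/2)) y
  rw [dist_comm (k (1/2)) y] at tr
  refine ⟨k (1/2), ?_, ?_, ?_, ?_⟩
  · linarith
  · linarith
  · rw [dist_comm]; linarith
  · rw [dist_comm]; linarith

lemma geo_unique [ProperSpace X] (hPT : Ptolemaic X) (hgeo : GeodesicMetricSpace X) {x y : X}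
    {c e : ℝ → X} (hc : GeoR x y c) (he : GeoR x y e) {u : ℝ} (h0 : 0 ≤ u) (h1 : u ≤ 1) :
    c u = e u := by
  by_contra hne
  have hg : 0 < dist (c u) (e u) := dist_pos.2 hne
  have hu0 : 0 < u := by
    rcases h0.eq_or_lt with h | h
    · exact absurd (by rw [← h, hc.1, he.1]) hne
    · exact h
  have hL : 0 < dist x y := by
    rcases (dist_nonneg (x := x) (y := y)).eq_or_lt with h | h
    · have t1 := hc.dist_left h0 h1
      have t2 := he.dist_left h0 h1
      have := dist_triangle_left (c u) (e u) x
      rw [← h] at t1 t2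
      linarith
    · exact h
  set L := dist x y with hLdef
  obtain ⟨η, hη⟩ : ∃ η, η = dist (c u) (e u) / 2 := ⟨_, rfl⟩
  have hηp : 0 < η := by rw [hη]; linarith
  obtain ⟨δ, hδ0, hδ⟩ : ∃ δ, 0 < δ ∧ δ < min u (η / (2 * L)) :=
    exists_between (lt_min hu0 (by positivity))
  have hδu : δ < u := lt_of_lt_of_le hδ (min_le_left _ _)
  have hδη : δ * (2 * L) < η := by
    rw [← lt_div_iff₀ (by positivity)]; exact lt_of_lt_of_le hδ (min_le_right _ _)
  let w : ℕ → ℝ := fun n => u - δ / (n + 1)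
  have hwm : StrictMono w := by
    intro a b hab
    have hab' : (a : ℝ) < b := by exact_mod_cast hab
    have : δ / ((b : ℝ) + 1) < δ / ((a : ℝ) + 1) :=
      div_lt_div_of_pos_left hδ0 (by positivity) (by linarith)
    show u - δ / (a + 1) < u - δ / (b + 1)
    linarith
  have hwl : ∀ n, u - δ ≤ w n ∧ w n < u := by
    intro n
    have hn : (0 : ℝ) ≤ n := Nat.cast_nonneg n
    have e1 : δ / ((n : ℝ) + 1) ≤ δ := div_le_self hδ0.le (by linarith)
    have e2 : 0 < δ / ((n : ℝ) + 1) := by positivity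
    constructor
    · show u - δ ≤ u - δ / (n + 1)
      linarith
    · show u - δ / (n + 1) < u
      linarith
  have hw01 : ∀ n, 0 < w n ∧ w n < 1 := fun n =>
    ⟨by linarith [(hwl n).1], by linarith [(hwl n).2]⟩
  have hwg : ∀ n, η ≤ dist (c (w n)) (e (w n)) := by
    intro n
    have a1 := hc.dist_of_le' (hw01 n).1.le (hwl n).2.le h1
    have a2 := he.dist_of_le (hw01 n).1.le (hwl n).2.le h1
    have tr := dist_triangle4 (c u) (c (w n)) (e (w n)) (e u)
    rw [a1, a2, ← hLdef] at tr
    have : L * (u - w n) ≤ L * δ := mul_le_mul_of_nonneg_left (by linarith [(hwl n).1]) hL.le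
    linarith
  have hmid := fun n => exists_mid hPT hgeo hc he (hw01 n).1.le (hw01 n).2.le
    (lt_of_lt_of_le hηp (hwg n))
  choose m hm using hmid
  obtain ⟨z, -, φ, hφ, hlim⟩ := (isCompact_closedBall x L).tendsto_subseq (x := m) (by
    intro n
    rw [mem_closedBall, dist_comm, (hm n).1]
    have := mul_le_mul_of_nonneg_left (hw01 n).2.le hL.le
    linarith)
  have hε : 0 < η ^ 2 / (32 * L) := by positivity
  obtain ⟨N, hN⟩ := Metric.tendsto_atTop.1 hlim _ hε
  refine kink_contradiction (fun t => dist z (c t) + dist z (e t)) (2 * L) η hηp ?_ ?_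
    (fun n => w (φ (n + N))) ?_ (fun n => hw01 _) ?_
  · intro s t r a1 a2 a3 a4
    have := hc.convex hPT hL z a1 a2 a3 a4
    have := he.convex hPT hL z a1 a2 a3 a4
    linarith
  · intro s t a1 a2 a3
    have b1 := abs_le.1 (hc.lip z a1 a2 a3)
    have b2 := abs_le.1 (he.lip z a1 a2 a3)
    rw [← hLdef] at b1 b2
    exact abs_le.2 ⟨by linarith [b1.1, b2.1], by linarith [b1.2, b2.2]⟩
  · intro a b hab
    exact hwm (hφ (by omega))
  · intro n
    have hz := hN (n + N) (by omega)
    simp only [Function.comp] at hz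
    generalize φ (n + N) = k at hz ⊢
    obtain ⟨hmx, hmy, hmc, hme⟩ := hm k
    have hgk := hwg k
    have hw := hw01 k
    generalize w k = v at *
    generalize m k = q at *
    refine ⟨min (min v (1 - v)) (η ^ 2 / (16 * L ^ 2)),
      lt_min (lt_min hw.1 (by linarith [hw.2])) (by positivity), ?_⟩
    intro h hh hlt _ _
    have e1 : h < v := lt_of_lt_of_le hlt ((min_le_left _ _).trans (min_le_left _ _))
    have e2 : h < 1 - v := lt_of_lt_of_le hlt ((min_le_left _ _).trans (min_le_right _ _))
    have e3 : h < η ^ 2 / (16 * L ^ 2) := lt_of_lt_of_le hlt (min_le_right _ _)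
    rw [lt_div_iff₀ (by positivity)] at e3
    rw [lt_div_iff₀ (by positivity)] at hz
    have hgp : 0 < dist (c v) (e v) := lt_of_lt_of_le hηp hgk
    have K := kink hPT hc he hL hh (by linarith) (by linarith) q hmx hmy hgp
    have D1 := hc.second_diff hPT q z hh (u := v) (by linarith) (by linarith)
    have D2 := he.second_diff hPT q z hh (u := v) (by linarith) (by linarith)
    rw [← hLdef] at K D1 D2
    rw [hmc] at D1
    rw [hme] at D2
    generalize dist (c v) (e v) = g at *
    set Δ := dist z (c (v + h)) + dist z (e (v + h)) + (dist z (c (v - h)) + dist z (e (v - h))) -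
      2 * (dist z (c v) + dist z (e v)) with hΔ
    set ε := dist q z
    set Q := (dist q (c (v + h)) + dist q (c (v - h))) + (dist q (e (v + h)) + dist q (e (v - h)))
      with hQ
    have D : g / 2 * (Q - 2 * g) - 8 * ε * (L * h) ≤ g / 2 * Δ := by
      rw [hQ, hΔ]; linarith
    have hh1 : h < 1 := by linarith
    have hsq : η ^ 2 ≤ g ^ 2 := by
      exact pow_le_pow_left₀ hηp.le hgk 2
    have K2 : 2 * g ^ 2 * h - 8 * (L * h) ^ 2 ≤ g * (Q - 2 * g) := by
      have : h * (4 * (L * h) ^ 2) ≤ 1 * (4 * (L * h) ^ 2) :=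
        mul_le_mul_of_nonneg_right hh1.le (by positivity)
      linarith
    have K3 : 8 * (L * h) ^ 2 ≤ η ^ 2 / 2 * h := by
      have := mul_le_mul_of_nonneg_right e3.le hh.le
      linarith
    have K4 : 16 * ε * (L * h) ≤ η ^ 2 / 2 * h := by
      have := mul_le_mul_of_nonneg_right hz.le hh.le
      linarith
    have K5 : g * (η * h) ≤ g * Δ := by
      have : η * g * h ≤ g * g * h :=
        mul_le_mul_of_nonneg_right (mul_le_mul_of_nonneg_right hgk hgp.le) hh.le
      have : η ^ 2 * h ≤ g ^ 2 * h := mul_le_mul_of_nonneg_right hsq hh.le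
      linarith
    exact le_of_mul_le_mul_left K5 hgp

end

lemma isGeo_unique {X : Type*} [MetricSpace X] [ProperSpace X]
    (hPT : Ptolemaic X) (hgeo : GeodesicMetricSpace X) {x y : X}
    {c e : Set.Icc (0:ℝ) 1 → X} (hc : IsGeodesicFromTo x y c) (he : IsGeodesicFromTo x y e) :
    c = e := by
  have conv : ∀ {c : Set.Icc (0:ℝ) 1 → X}, IsGeodesicFromTo x y c →
      GeoR x y (fun t => c (Set.projIcc 0 1 zero_le_one t)) := by
    intro c hc
    refine ⟨?_, ?_, ?_⟩
    · simp only [Set.projIcc_left]; exact hc.1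
    · simp only [Set.projIcc_right]; exact hc.2.1
    · intro s hs t ht
      simp only [Set.projIcc_of_mem zero_le_one hs, Set.projIcc_of_mem zero_le_one ht]
      rw [hc.2.2, mul_comm]
  funext t
  have := geo_unique hPT hgeo (conv hc) (conv he) t.2.1 t.2.2
  simpa using this

/-- **Unique geodesics, depending continuously on their endpoints, in a proper
geodesic PT space.** -/
theorem unique_geodesics_continuous_dependence
    (X : Type*) [MetricSpace X] [ProperSpace X]
    (hPT : Ptolemaic X) (hgeo : GeodesicMetricSpace X) :
    ∃ F : X → X → Set.Icc (0:ℝ) 1 → X,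
      Continuous (fun p : X × X × Set.Icc (0:ℝ) 1 => F p.1 p.2.1 p.2.2) ∧
      ∀ x y : X, IsGeodesicFromTo x y (F x y) ∧
        ∀ c : Set.Icc (0:ℝ) 1 → X, IsGeodesicFromTo x y c → c = F x y := by
  have hex : ∀ x y : X, ∃ c : Set.Icc (0:ℝ) 1 → X, IsGeodesicFromTo x y c := by
    intro x y
    obtain ⟨c, h0, h1, h⟩ := hgeo x y
    refine ⟨fun t => c t, h0, h1, fun s t => ?_⟩
    rw [h s s.2 t t.2, mul_comm]
  choose F hF using hex
  refine ⟨F, ?_, fun x y => ⟨hF x y, fun c hc => isGeo_unique hPT hgeo hc (hF x y)⟩⟩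
  rw [continuous_iff_continuousAt]
  rintro ⟨x, y, t⟩
  rw [ContinuousAt, tendsto_iff_ultrafilter]
  intro U hU
  have hx : Tendsto (fun p : X × X × Set.Icc (0:ℝ) 1 => p.1) U (𝓝 x) :=
    (continuous_fst.tendsto (x, y, t)).mono_left hU
  have hy : Tendsto (fun p : X × X × Set.Icc (0:ℝ) 1 => p.2.1) U (𝓝 y) :=
    ((continuous_fst.comp continuous_snd).tendsto (x, y, t)).mono_left hU
  have ht : Tendsto (fun p : X × X × Set.Icc (0:ℝ) 1 => p.2.2) U (𝓝 t) :=
    ((continuous_snd.comp continuous_snd).tendsto (x, y, t)).mono_left hU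
  have hd : Tendsto (fun p : X × X × Set.Icc (0:ℝ) 1 => dist p.1 p.2.1) U (𝓝 (dist x y)) :=
    hx.dist hy
  -- pointwise limits along the ultrafilter
  have hlim : ∀ s : Set.Icc (0:ℝ) 1, ∃ z, Tendsto
      (fun p : X × X × Set.Icc (0:ℝ) 1 => F p.1 p.2.1 s) U (𝓝 z) := by
    intro s
    have hb : ∀ᶠ p : X × X × Set.Icc (0:ℝ) 1 in (U : Filter _),
        F p.1 p.2.1 s ∈ closedBall x (1 + (dist x y + 1)) := by
      have e1 := hx.eventually (ball_mem_nhds x zero_lt_one)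
      have e2 := hd.eventually (gt_mem_nhds (lt_add_one (dist x y)))
      filter_upwards [e1, e2] with p h1 h2
      have g := (hF p.1 p.2.1).2.2 s ⟨0, by norm_num⟩
      rw [(hF p.1 p.2.1).1] at g
      simp only [sub_zero, abs_of_nonneg s.2.1] at g
      have : (s : ℝ) * dist p.1 p.2.1 ≤ 1 * dist p.1 p.2.1 :=
        mul_le_mul_of_nonneg_right s.2.2 dist_nonneg
      have tr := dist_triangle (F p.1 p.2.1 s) p.1 x
      rw [mem_closedBall]
      linarith
    obtain ⟨z, -, hz⟩ := (isCompact_closedBall x (1 + (dist x y + 1))).ultrafilter_le_nhds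
      (U.map (fun p : X × X × Set.Icc (0:ℝ) 1 => F p.1 p.2.1 s))
      (by rw [le_principal_iff]; exact hb)
    exact ⟨z, hz⟩
  choose c hc using hlim
  have hcg : IsGeodesicFromTo x y c := by
    refine ⟨?_, ?_, ?_⟩
    · refine tendsto_nhds_unique (hc _) ?_
      refine hx.congr (fun p => ?_)
      exact (hF p.1 p.2.1).1.symm
    · refine tendsto_nhds_unique (hc _) ?_
      refine hy.congr (fun p => ?_)
      exact (hF p.1 p.2.1).2.1.symm
    · intro s s'
      refine tendsto_nhds_unique ((hc s).dist (hc s')) ?_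
      refine (hd.const_mul |(s:ℝ) - s'|).congr (fun p => ?_)
      exact ((hF p.1 p.2.1).2.2 s s').symm
  have hceq : c = F x y := isGeo_unique hPT hgeo hcg (hF x y)
  have h1 := hc t
  rw [hceq] at h1
  have h2 : Tendsto (fun p : X × X × Set.Icc (0:ℝ) 1 =>
      dist (F p.1 p.2.1 t) (F p.1 p.2.1 p.2.2)) U (𝓝 0) := by
    have ht' : Tendsto (fun p : X × X × Set.Icc (0:ℝ) 1 => |(t:ℝ) - p.2.2|) U (𝓝 0) := by
      have := (tendsto_const_nhds (x := (t:ℝ))).sub ((continuous_subtype_val.tendsto t).comp ht)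
      simpa using this.abs
    have := ht'.mul hd
    rw [zero_mul] at this
    refine this.congr (fun p => ?_)
    exact ((hF p.1 p.2.1).2.2 t p.2.2).symm
  exact (tendsto_iff_of_dist h2).1 h1
end

section
/- Let X be a proper geodesic ptolemaic metric space and suppose there is a homeomorphism h : ℝ × [0,1] → X together with two unit-speed geodesic lines c₀, c₁ : ℝ → X that are parallel and whose images are h(ℝ × {0}) and h(ℝ × {1}) respectively. Then for every x ∈ X there exists a unique unit-speed geodesic line c_x : ℝ → X with c_x(0) = x that is parallel to c₀. -/
open Metric Set Filter Topology

/-- A unit-speed geodesic line: an isometric embedding of ℝ. -/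
def IsGeodesicLine {X : Type*} [MetricSpace X] (c : ℝ → X) : Prop :=
  ∀ s t : ℝ, dist (c s) (c t) = |s - t|

/-- Two lines are parallel if their distance is sublinear in both directions. -/
def ParallelLines {X : Type*} [MetricSpace X] (c₀ c₁ : ℝ → X) : Prop :=
  Filter.Tendsto (fun t => dist (c₀ t) (c₁ t) / |t|) Filter.atTop (nhds 0) ∧
  Filter.Tendsto (fun t => dist (c₀ t) (c₁ t) / |t|) Filter.atBot (nhds 0)

namespace PTS

/-- `z` lies metrically between `x` and `y`. -/
def Btw {X : Type*} [MetricSpace X] (x z y : X) : Prop := dist x z + dist z y = dist x y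

/-- Sets closed under betweenness. -/
def BConv {X : Type*} [MetricSpace X] (S : Set X) : Prop :=
  ∀ x ∈ S, ∀ y ∈ S, ∀ z, Btw x z y → z ∈ S

/-- Functions convex along betweenness. -/
def BCvx {X : Type*} [MetricSpace X] (f : X → ℝ) : Prop :=
  ∀ x z y : X, Btw x z y → dist x y * f z ≤ dist z y * f x + dist x z * f y

section basics
variable {X : Type*} [MetricSpace X]

lemma bcvx_dist (hPT : Ptolemaic X) (w : X) : BCvx (fun y => dist y w) := by
  intro x z y hb
  have := hPT x y z w
  have e1 : dist y z = dist z y := dist_comm _ _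
  rw [e1] at this
  simp only
  linarith

lemma btw_self {x z : X} (h : Btw x z x) : z = x := by
  unfold Btw at h
  rw [dist_self, dist_comm z x] at h
  have : dist x z = 0 := by have := dist_nonneg (x := x) (y := z); linarith
  exact (dist_eq_zero.1 this).symm

lemma BCvx.le_of {f : X → ℝ} (hf : BCvx f) {x z y : X} (hb : Btw x z y) {r : ℝ}
    (hx : f x ≤ r) (hy : f y ≤ r) : f z ≤ r := by
  by_cases hxy : x = y
  · subst hxy; rw [btw_self hb]; exact hx
  · have hD : 0 < dist x y := dist_pos.2 hxy
    have h1 := hf x z y hb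
    have h2 : dist x y * f z ≤ dist x y * r := by
      have e := hb; unfold Btw at e
      have := mul_le_mul_of_nonneg_left hx (dist_nonneg (x := z) (y := y))
      have := mul_le_mul_of_nonneg_left hy (dist_nonneg (x := x) (y := z))
      have e3 : dist x y * r = dist x z * r + dist z y * r := by rw [← e]; ring
      linarith
    exact le_of_mul_le_mul_left h2 hD

lemma BCvx.le_set {f : X → ℝ} (hf : BCvx f) (r : ℝ) : BConv {x | f x ≤ r} :=
  fun _ hx _ hy _ hb => hf.le_of hb hx hy

lemma BCvx.lt_set {f : X → ℝ} (hf : BCvx f) (r : ℝ) : BConv {x | f x < r} := by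
  intro x hx y hy z hb
  exact lt_of_le_of_lt (hf.le_of hb (le_max_left _ _) (le_max_right _ _)) (max_lt hx hy)

lemma BConv.inter {S T : Set X} (hS : BConv S) (hT : BConv T) : BConv (S ∩ T) :=
  fun x hx y hy z hb => ⟨hS x hx.1 y hy.1 z hb, hT x hx.2 y hy.2 z hb⟩

lemma bconv_closedBall (hPT : Ptolemaic X) (w : X) (r : ℝ) : BConv (closedBall w r) :=
  (bcvx_dist hPT w).le_set r

lemma geo_cont (hgeo : GeodesicMetricSpace X) (x y : X) : ∃ c : ℝ → X, Continuous c ∧ c 0 = x ∧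
    c 1 = y ∧ (∀ t, Btw x (c t) y) ∧ ∀ s ∈ Icc (0:ℝ) 1, ∀ t ∈ Icc (0:ℝ) 1,
      dist (c s) (c t) = dist x y * |s - t| := by
  obtain ⟨c, h0, h1, hc⟩ := hgeo x y
  have m0 : (0:ℝ) ∈ Icc (0:ℝ) 1 := by simp
  have m1 : (1:ℝ) ∈ Icc (0:ℝ) 1 := by simp
  have hcont : ContinuousOn c (Icc 0 1) := by
    have : LipschitzOnWith (Real.toNNReal (dist x y)) c (Icc 0 1) := by
      apply LipschitzOnWith.of_dist_le_mul
      intro s hs t ht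
      rw [hc s hs t ht, Real.coe_toNNReal _ dist_nonneg, Real.dist_eq]
    exact this.continuousOn
  refine ⟨fun t => c (projIcc 0 1 zero_le_one t), ?_, ?_, ?_, ?_, ?_⟩
  · have := continuousOn_iff_continuous_domRestrict.1 hcont
    exact this.comp continuous_projIcc
  · simp [projIcc, h0]
  · simp [projIcc, h1]
  · intro t
    have hp := (projIcc (0:ℝ) 1 zero_le_one t).2
    unfold Btw
    have e1 := hc 0 m0 _ hp
    have e2 := hc _ hp 1 m1
    rw [h0] at e1; rw [h1] at e2
    simp only
    rw [e1, e2, abs_of_nonpos (by linarith [hp.1]), abs_of_nonpos (by linarith [hp.2])]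
    ring
  · intro s hs t ht
    simp only [projIcc_of_mem _ hs, projIcc_of_mem _ ht]
    exact hc s hs t ht

lemma BConv.preconn (hgeo : GeodesicMetricSpace X) {S : Set X} (hS : BConv S) :
    IsPreconnected S := by
  apply isPreconnected_of_forall_pair
  intro x hx y hy
  obtain ⟨c, hc, h0, h1, hb, _⟩ := geo_cont hgeo x y
  refine ⟨range c, ?_, ⟨0, h0⟩, ⟨1, h1⟩, isPreconnected_range hc⟩
  rintro _ ⟨t, rfl⟩
  exact hS x hx y hy _ (hb t)

lemma exists_mid (hgeo : GeodesicMetricSpace X) (x y : X) :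
    ∃ m, dist x m = dist x y / 2 ∧ dist m y = dist x y / 2 := by
  obtain ⟨c, h0, h1, hc⟩ := hgeo x y
  refine ⟨c (1/2), ?_, ?_⟩
  · rw [← h0, hc 0 (by simp) (1/2) (by norm_num), h0, abs_of_nonpos (by norm_num)]; ring
  · nth_rewrite 1 [← h1]
    rw [hc (1/2) (by norm_num) 1 (by simp), abs_of_nonpos (by norm_num)]; ring

/-- The reversed line. -/
def rev (c : ℝ → X) : ℝ → X := fun t => c (-t)

lemma line_rev {c : ℝ → X} (hc : IsGeodesicLine c) : IsGeodesicLine (rev c) := by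
  intro s t; unfold rev; rw [hc, abs_sub_comm]; congr 1; ring

lemma par_rev {c c' : ℝ → X} (hp : ParallelLines c c') : ParallelLines (rev c) (rev c') := by
  constructor
  · have := hp.2.comp tendsto_neg_atTop_atBot
    simpa [Function.comp_def, rev] using this
  · have := hp.1.comp tendsto_neg_atBot_atTop
    simpa [Function.comp_def, rev] using this

lemma par_symm {c c' : ℝ → X} (hp : ParallelLines c c') : ParallelLines c' c := by
  unfold ParallelLines at *
  simpa only [dist_comm] using hp

lemma line_btw {c : ℝ → X} (hc : IsGeodesicLine c) {s t u : ℝ} (h1 : s ≤ t) (h2 : t ≤ u) :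
    Btw (c s) (c t) (c u) := by
  unfold Btw
  rw [hc, hc, hc, abs_of_nonpos (by linarith), abs_of_nonpos (by linarith),
    abs_of_nonpos (by linarith)]; ring

lemma line_cont {c : ℝ → X} (hc : IsGeodesicLine c) : Continuous c := by
  have : Isometry c := Isometry.of_dist_eq (fun s t => by rw [hc, Real.dist_eq])
  exact this.continuous

/-- The Busemann function of a line towards `+∞`. -/
noncomputable def bus (c : ℝ → X) (y : X) : ℝ := ⨅ t, (dist y (c t) - t)

lemma bus_bdd {c : ℝ → X} (hc : IsGeodesicLine c) (y : X) :
    BddBelow (range fun t => dist y (c t) - t) := by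
  refine ⟨- dist y (c 0), ?_⟩
  rintro _ ⟨t, rfl⟩
  have h1 := dist_triangle (c 0) y (c t)
  rw [hc, dist_comm (c 0) y] at h1
  have := neg_abs_le (0 - t)
  have := le_abs_self (t)
  rw [zero_sub, abs_neg] at *
  simp only; linarith

lemma bus_le {c : ℝ → X} (hc : IsGeodesicLine c) (y : X) (t : ℝ) : bus c y ≤ dist y (c t) - t :=
  ciInf_le (bus_bdd hc y) t

lemma bus_tendsto {c : ℝ → X} (hc : IsGeodesicLine c) (y : X) :
    Tendsto (fun t => dist y (c t) - t) atTop (𝓝 (bus c y)) := by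
  apply tendsto_atTop_ciInf _ (bus_bdd hc y)
  intro s t hst
  have h1 := dist_triangle y (c s) (c t)
  rw [hc, abs_of_nonpos (by linarith)] at h1
  simp only; linarith

lemma bus_lip {c : ℝ → X} (hc : IsGeodesicLine c) (x y : X) : bus c x ≤ bus c y + dist x y := by
  have h1 := bus_tendsto hc x
  have h2 := (bus_tendsto hc y).add_const (dist x y)
  apply le_of_tendsto_of_tendsto' h1 h2
  intro t
  linarith [dist_triangle x y (c t)]

lemma bus_cont {c : ℝ → X} (hc : IsGeodesicLine c) : Continuous (bus c) := by
  have : LipschitzWith 1 (bus c) := LipschitzWith.of_le_add (bus_lip hc)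
  exact this.continuous

lemma bus_self {c : ℝ → X} (hc : IsGeodesicLine c) (s : ℝ) : bus c (c s) = -s := by
  apply le_antisymm
  · have := bus_le hc (c s) s; simpa using this
  · apply le_ciInf; intro t
    rw [hc]; have := neg_abs_le (s - t); linarith

lemma bus_bcvx (hPT : Ptolemaic X) {c : ℝ → X} (hc : IsGeodesicLine c) : BCvx (bus c) := by
  intro x z y hb
  have h1 := (bus_tendsto hc z).const_mul (dist x y)
  have h2 := ((bus_tendsto hc x).const_mul (dist z y)).add
    ((bus_tendsto hc y).const_mul (dist x z))
  apply le_of_tendsto_of_tendsto' h1 h2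
  intro t
  have := bcvx_dist hPT (c t) x z y hb
  unfold Btw at hb
  simp only at this
  rw [← hb] at *
  nlinarith

lemma bus_add_nonneg {c : ℝ → X} (hc : IsGeodesicLine c) (y : X) :
    0 ≤ bus c y + bus (rev c) y := by
  have h1 := (bus_tendsto hc y).add (bus_tendsto (line_rev hc) y)
  apply ge_of_tendsto' h1
  intro t
  have h2 := dist_triangle (c t) y (c (-t))
  rw [hc, dist_comm (c t) y] at h2
  have := le_abs_self (t - -t)
  simp only [rev]; linarith

lemma le_of_cvx_sublin {g : ℝ → ℝ}
    (hcv : ∀ s t N, s < t → t < N → (N - s) * g t ≤ (N - t) * g s + (t - s) * g N)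
    (hl : Tendsto (fun N => g N / N) atTop (𝓝 0)) {s t : ℝ} (hst : s < t) : g t ≤ g s := by
  have key : ∀ r : ℝ, Tendsto (fun N : ℝ => (N - r) / N) atTop (𝓝 1) := by
    intro r
    have : Tendsto (fun N : ℝ => 1 - r / N) atTop (𝓝 (1 - 0)) :=
      tendsto_const_nhds.sub (tendsto_const_nhds.div_atTop tendsto_id)
    rw [sub_zero] at this
    apply this.congr'
    filter_upwards [eventually_gt_atTop 0] with N hN
    field_simp
  have h1 := (key s).mul_const (g t)
  have h2 := ((key t).mul_const (g s)).add (hl.const_mul (t - s))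
  have := le_of_tendsto_of_tendsto h1 h2 (by
    filter_upwards [eventually_gt_atTop 0, eventually_gt_atTop t] with N hN htN
    have := hcv s t N hst htN
    have e1 : (N - s) / N * g t = ((N - s) * g t) / N := by ring
    have e2 : (N - t) / N * g s + (t - s) * (g N / N) = ((N - t) * g s + (t - s) * g N) / N := by
      ring
    rw [e1, e2]
    exact div_le_div_of_nonneg_right this hN.le)
  simpa using this

lemma const_of_cvx_sublin {g : ℝ → ℝ}
    (hcv : ∀ s t N, s < t → t < N → (N - s) * g t ≤ (N - t) * g s + (t - s) * g N)
    (hl : Tendsto (fun N => g N / N) atTop (𝓝 0))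
    (hl' : Tendsto (fun N => g N / N) atBot (𝓝 0)) (s t : ℝ) : g s = g t := by
  wlog hst : s < t generalizing s t
  · rcases (not_lt.1 hst).lt_or_eq with h | h
    · exact (this t s h).symm
    · rw [h]
  apply le_antisymm _ (le_of_cvx_sublin hcv hl hst)
  have := le_of_cvx_sublin (g := fun r => g (-r)) (s := -t) (t := -s) (by
      intro a b N hab hbN
      have := hcv (-N) (-b) (-a) (by linarith) (by linarith)
      linarith) (by
      have h := (hl'.comp tendsto_neg_atTop_atBot).neg
      rw [neg_zero] at h
      refine h.congr fun N => ?_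
      simp only [Function.comp]; rw [div_neg, neg_neg]) (by linarith)
  simpa using this

lemma bus_parallel (hPT : Ptolemaic X) {c c' : ℝ → X} (hc : IsGeodesicLine c)
    (hc' : IsGeodesicLine c') (hp : ParallelLines c c') (s : ℝ) :
    bus c (c' s) = bus c (c' 0) - s := by
  have hb : ∀ N, |(bus c (c' N) + N) / N| ≤ dist (c N) (c' N) / |N| := by
    intro N
    rw [abs_div]
    apply div_le_div_of_nonneg_right _ (abs_nonneg _)
    rw [abs_le]
    have h1 := bus_lip hc (c N) (c' N)
    have h2 := bus_lip hc (c' N) (c N)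
    rw [dist_comm (c' N)] at h2
    rw [bus_self hc] at *
    constructor <;> linarith
  have := const_of_cvx_sublin (g := fun s => bus c (c' s) + s) (by
    intro s t N hst htN
    have := bus_bcvx hPT hc _ _ _ (line_btw hc' hst.le htN.le)
    rw [hc', hc', hc', abs_of_nonpos (by linarith), abs_of_nonpos (by linarith),
      abs_of_nonpos (by linarith)] at this
    nlinarith) (squeeze_zero_norm hb hp.1) (squeeze_zero_norm hb hp.2) s 0
  linarith

lemma bus_parallel_sum (hPT : Ptolemaic X) {c c' : ℝ → X} (hc : IsGeodesicLine c)
    (hc' : IsGeodesicLine c') (hp : ParallelLines c c') :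
    bus c (c' 0) + bus (rev c) (c' 0) = 0 := by
  apply le_antisymm _ (bus_add_nonneg hc _)
  set α := bus c (c' 0) with hα
  set β := bus (rev c) (c' 0) with hβ
  have hβT : ∀ T, bus (rev c) (c' T) = β + T := by
    intro T
    have := bus_parallel hPT (line_rev hc) (line_rev hc') (par_rev hp) (-T)
    simp only [rev, neg_neg, neg_zero] at this
    rw [hβ]; linarith
  have h1 : Tendsto (fun T : ℝ => (α + β) + α * β / T) atTop (𝓝 ((α + β) + 0)) :=
    tendsto_const_nhds.add (tendsto_const_nhds.div_atTop tendsto_id)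
  have h2 := hp.1.const_mul (dist (c' 0) (c 0))
  have := le_of_tendsto_of_tendsto h1 h2 (by
    filter_upwards [eventually_gt_atTop 0, eventually_gt_atTop (-α), eventually_gt_atTop (-β)]
      with T h0 hTα hTβ
    have a1 : T + α ≤ dist (c' 0) (c T) := by have := bus_le hc (c' 0) T; linarith
    have a2 : T + β ≤ dist (c' T) (c 0) := by
      have := bus_le (line_rev hc) (c' T) 0
      rw [hβT] at this; simp only [rev, neg_zero] at this; linarith
    have a3 := hPT (c' 0) (c T) (c' T) (c 0)
    have a4 := mul_le_mul a1 a2 (by linarith) dist_nonneg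
    rw [hc', hc, zero_sub, sub_zero, abs_neg, abs_of_pos h0] at a3
    have e : (α + β) + α * β / T = ((α + β) * T + α * β) / T := by field_simp
    rw [e, abs_of_pos h0, ← mul_div_assoc]
    apply div_le_div_of_nonneg_right _ h0.le
    nlinarith)
  simpa using this

end basics
end PTS

namespace PTS

/-- `f` has a continuous logarithm on `A`. -/
def HasLog {Y : Type*} [TopologicalSpace Y] (f : Y → ℂ) (A : Set Y) : Prop :=
  ∃ l : Y → ℂ, ContinuousOn l A ∧ ∀ y ∈ A, Complex.exp (l y) = f y

section logs
variable {Y : Type*} [TopologicalSpace Y]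

lemma HasLog.mono {f : Y → ℂ} {A B : Set Y} (h : HasLog f B) (hAB : A ⊆ B) : HasLog f A := by
  obtain ⟨l, h1, h2⟩ := h
  exact ⟨l, h1.mono hAB, fun y hy => h2 y (hAB hy)⟩

lemma int_const {A : Set Y} (hA : IsPreconnected A) {g : Y → ℝ} (hg : ContinuousOn g A)
    (hz : ∀ y ∈ A, ∃ n : ℤ, g y = n) : ∃ n : ℤ, ∀ y ∈ A, g y = n := by
  rcases A.eq_empty_or_nonempty with h | ⟨y0, hy0⟩
  · subst h; exact ⟨0, by simp⟩
  · obtain ⟨n, hn⟩ := hz y0 hy0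
    refine ⟨n, fun y hy => ?_⟩
    have hd : DiscreteTopology (range ((↑) : ℤ → ℝ)) :=
      (Int.isClosedEmbedding_coe_real.isEmbedding.toHomeomorph).symm.isEmbedding.discreteTopology
    rw [← hn]
    exact hA.constant_of_mapsTo (T := range ((↑) : ℤ → ℝ)) ⟨hd⟩ hg
      (fun y hy => by obtain ⟨m, hm⟩ := hz y hy; exact ⟨m, hm.symm⟩) hy hy0

lemma log_const {A : Set Y} (hA : IsPreconnected A) {l1 l2 : Y → ℂ} (h1 : ContinuousOn l1 A)
    (h2 : ContinuousOn l2 A) (he : ∀ y ∈ A, Complex.exp (l1 y) = Complex.exp (l2 y)) :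
    ∃ n : ℤ, ∀ y ∈ A, l1 y = l2 y + n * (2 * Real.pi * Complex.I) := by
  have hne : (2 * Real.pi * Complex.I : ℂ) ≠ 0 := Complex.two_pi_I_ne_zero
  have hx : ∀ y ∈ A, ∃ n : ℤ, l1 y = l2 y + n * (2 * Real.pi * Complex.I) := fun y hy =>
    Complex.exp_eq_exp_iff_exists_int.1 (he y hy)
  have hq : ∀ y (n : ℤ), l1 y = l2 y + n * (2 * Real.pi * Complex.I) →
      ((l1 y - l2 y) / (2 * Real.pi * Complex.I)).re = n := by
    intro y n h
    have : (l1 y - l2 y) / (2 * Real.pi * Complex.I) = n := by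
      rw [h, add_sub_cancel_left, mul_div_cancel_right₀ _ hne]
    rw [this]; simp
  obtain ⟨n, hn⟩ := int_const hA (g := fun y => ((l1 y - l2 y) / (2 * Real.pi * Complex.I)).re)
    (Complex.continuous_re.comp_continuousOn ((h1.sub h2).div_const _))
    (fun y hy => by obtain ⟨n, hn⟩ := hx y hy; exact ⟨n, hq y n hn⟩)
  refine ⟨n, fun y hy => ?_⟩
  obtain ⟨m, hm⟩ := hx y hy
  have h3 := hq y m hm
  have h4 := hn y hy
  rw [h3] at h4
  have : m = n := by exact_mod_cast h4
  rw [hm, this]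

lemma HasLog.union {f : Y → ℂ} {A B : Set Y} (hA : HasLog f A) (hB : HasLog f B)
    (cA : IsClosed A) (cB : IsClosed B) (hAB : IsPreconnected (A ∩ B)) : HasLog f (A ∪ B) := by
  classical
  obtain ⟨l1, h1, e1⟩ := hA
  obtain ⟨l2, h2, e2⟩ := hB
  obtain ⟨n, hn⟩ := log_const hAB (h1.mono inter_subset_left) (h2.mono inter_subset_right)
    (fun y hy => by rw [e1 y hy.1, e2 y hy.2])
  have hB' : ∀ y ∈ B, A.piecewise l1 (fun y => l2 y + n * (2 * Real.pi * Complex.I)) y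
      = l2 y + n * (2 * Real.pi * Complex.I) := by
    intro y hy
    by_cases hyA : y ∈ A
    · rw [piecewise_eq_of_mem _ _ _ hyA, hn y ⟨hyA, hy⟩]
    · rw [piecewise_eq_of_notMem _ _ _ hyA]
  refine ⟨A.piecewise l1 (fun y => l2 y + n * (2 * Real.pi * Complex.I)), ?_, ?_⟩
  · apply ContinuousOn.union_of_isClosed _ _ cA cB
    · exact h1.congr (fun y hy => piecewise_eq_of_mem _ _ _ hy)
    · exact (h2.add continuousOn_const).congr hB'
  · rintro y (hy | hy)
    · rw [piecewise_eq_of_mem _ _ _ hy, e1 y hy]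
    · rw [hB' y hy, Complex.exp_add, e2 y hy, Complex.exp_int_mul_two_pi_mul_I, mul_one]

lemma log_I_mul' {z : ℂ} (hz : 0 < z.re) :
    Complex.log (Complex.I * z) = Complex.log z + Real.pi / 2 * Complex.I ∧
    Complex.log (-Complex.I * z) = Complex.log z - Real.pi / 2 * Complex.I := by
  have hz0 : z ≠ 0 := by rintro rfl; simp at hz
  have ha := Complex.abs_arg_lt_pi_div_two_iff.2 (Or.inl hz)
  rw [abs_lt] at ha
  constructor
  · rw [(Complex.log_mul_eq_add_log_iff Complex.I_ne_zero hz0).2, Complex.log_I]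
    · ring
    · rw [Complex.arg_I]; constructor <;> linarith [Real.pi_pos]
  · rw [(Complex.log_mul_eq_add_log_iff (neg_ne_zero.2 Complex.I_ne_zero) hz0).2,
      Complex.log_neg_I]
    · ring
    · rw [Complex.arg_neg_I]; constructor <;> linarith [Real.pi_pos]

lemma no_log {f : Y → ℂ} {A Qr Qt Ql Qb : Set Y} (hf : HasLog f A)
    (hfc : ContinuousOn f A)
    (sr : Qr ⊆ A) (st : Qt ⊆ A) (sl : Ql ⊆ A) (sb : Qb ⊆ A)
    (pr : IsPreconnected Qr) (pt : IsPreconnected Qt)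
    (pl : IsPreconnected Ql) (pb : IsPreconnected Qb)
    (fr : ∀ y ∈ Qr, 0 < (f y).re) (fl : ∀ y ∈ Ql, (f y).re < 0)
    (ft : ∀ y ∈ Qt, 0 ≤ (f y).im) (fb : ∀ y ∈ Qb, (f y).im ≤ 0)
    (hrt : (Qr ∩ Qt).Nonempty) (htl : (Qt ∩ Ql).Nonempty)
    (hlb : (Ql ∩ Qb).Nonempty) (hbr : (Qb ∩ Qr).Nonempty) : False := by
  obtain ⟨l, hl, he⟩ := hf
  have hne : ∀ y ∈ A, f y ≠ 0 := fun y hy => by rw [← he y hy]; exact Complex.exp_ne_zero _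
  -- generic piece
  have piece : ∀ (Q : Set Y) (a k : ℂ), Q ⊆ A → IsPreconnected Q →
      (∀ y ∈ Q, a * f y ∈ Complex.slitPlane) → a * Complex.exp k = 1 →
      ∃ n : ℤ, ∀ y ∈ Q, l y = (Complex.log (a * f y) + k) + n * (2 * Real.pi * Complex.I) := by
    intro Q a k hQ hp hs hk
    apply log_const hp (hl.mono hQ)
    · exact ((continuousOn_const.mul (hfc.mono hQ)).clog hs).add continuousOn_const
    · intro y hy
      rw [he y (hQ hy), Complex.exp_add, Complex.exp_log (Complex.slitPlane_ne_zero (hs y hy))]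
      calc f y = (a * Complex.exp k) * f y := by rw [hk, one_mul]
        _ = _ := by ring
  have eI : Complex.exp (Real.pi / 2 * Complex.I) = Complex.I := Complex.exp_pi_div_two_mul_I
  have eI' : Complex.exp (-(Real.pi / 2 * Complex.I)) = -Complex.I := by
    rw [Complex.exp_neg, eI, Complex.inv_I]
  obtain ⟨nr, hr⟩ := piece Qr 1 0 sr pr (fun y hy => by
    rw [one_mul]; exact Or.inl (fr y hy)) (by simp)
  obtain ⟨nl, hl'⟩ := piece Ql (-1) (Real.pi * Complex.I) sl pl (fun y hy => by
    refine Or.inl ?_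
    have := fl y hy; simpa using this) (by rw [Complex.exp_pi_mul_I]; ring)
  obtain ⟨nt, ht⟩ := piece Qt (-Complex.I) (Real.pi / 2 * Complex.I) st pt (fun y hy => by
    have h0 := hne y (st hy)
    rw [Complex.mem_slitPlane_iff]
    rcases (ft y hy).lt_or_eq with h | h
    · left; simpa using h
    · right
      intro h1
      apply h0
      apply Complex.ext
      · simpa using h1
      · simpa using h.symm) (by rw [eI]; simp)
  obtain ⟨nb, hb⟩ := piece Qb Complex.I (-(Real.pi / 2 * Complex.I)) sb pb (fun y hy => by
    have h0 := hne y (sb hy)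
    rw [Complex.mem_slitPlane_iff]
    rcases (fb y hy).lt_or_eq with h | h
    · left; simpa using h
    · right
      intro h1
      apply h0
      apply Complex.ext
      · simpa using h1
      · simpa using h) (by rw [eI']; simp)
  have hP : (2 * Real.pi * Complex.I : ℂ) ≠ 0 := Complex.two_pi_I_ne_zero
  have fin : ∀ a b : ℤ, (a : ℂ) * (2 * Real.pi * Complex.I) = b * (2 * Real.pi * Complex.I) →
      a = b := fun a b h => by exact_mod_cast mul_right_cancel₀ hP h
  have e1 : nr = nt := by
    obtain ⟨y, h1, h2⟩ := hrt
    have a1 := hr y h1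
    have a2 := ht y h2
    rw [(log_I_mul' (fr y h1)).2] at a2
    rw [one_mul] at a1
    apply fin
    rw [a1] at a2
    linear_combination a2
  have e2 : nt = nl := by
    obtain ⟨y, h1, h2⟩ := htl
    have a1 := ht y h1
    have a2 := hl' y h2
    have hz : 0 < (-1 * f y).re := by have := fl y h2; simpa using this
    have : -Complex.I * f y = Complex.I * (-1 * f y) := by ring
    rw [this, (log_I_mul' hz).1] at a1
    apply fin
    rw [a1] at a2
    linear_combination a2
  have e3 : nl + 1 = nb := by
    obtain ⟨y, h1, h2⟩ := hlb
    have a1 := hl' y h1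
    have a2 := hb y h2
    have hz : 0 < (-1 * f y).re := by have := fl y h1; simpa using this
    have : Complex.I * f y = -Complex.I * (-1 * f y) := by ring
    rw [this, (log_I_mul' hz).2] at a2
    apply fin
    rw [a1] at a2
    push_cast
    linear_combination a2
  have e4 : nb = nr := by
    obtain ⟨y, h1, h2⟩ := hbr
    have a1 := hb y h1
    have a2 := hr y h2
    rw [(log_I_mul' (fr y h2)).1] at a1
    rw [one_mul] at a2
    apply fin
    rw [a1] at a2
    linear_combination a2
  omega

end logs

section logb
variable {X : Type*} [MetricSpace X]

lemma exists_point_at (hgeo : GeodesicMetricSpace X) (x y : X) {s : ℝ} (h0 : 0 ≤ s)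
    (h1 : s ≤ dist x y) : ∃ z, dist x z = s ∧ dist z y = dist x y - s := by
  by_cases hxy : x = y
  · subst hxy
    rw [dist_self] at h1
    exact ⟨x, by rw [dist_self]; linarith, by rw [dist_self]; linarith⟩
  · have hD : 0 < dist x y := dist_pos.2 hxy
    obtain ⟨c, e0, e1, hc⟩ := hgeo x y
    have hm : s / dist x y ∈ Icc (0:ℝ) 1 := ⟨by positivity, (div_le_one hD).2 h1⟩
    refine ⟨c (s / dist x y), ?_, ?_⟩
    · have := hc 0 (by simp) _ hm
      rw [e0, zero_sub, abs_neg, abs_of_nonneg hm.1, mul_div_cancel₀ _ hD.ne'] at this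
      exact this
    · have := hc _ hm 1 (by simp)
      rw [e1, abs_of_nonpos (by linarith [hm.2])] at this
      rw [this]; field_simp; ring

lemma log_on_bconv [ProperSpace X] (hPT : Ptolemaic X) (hgeo : GeodesicMetricSpace X)
    {G : Set X} (cG : IsClosed G) (hG : BConv G) {f : X → ℂ} (hf : Continuous f)
    (hfG : ∀ y ∈ G, f y ≠ 0) {w0 : X} (hw0 : w0 ∈ G) {R : ℝ} (hR : 0 ≤ R) :
    HasLog f (G ∩ closedBall w0 R) := by
  have hcomp : ∀ r, IsCompact (G ∩ closedBall w0 r) := fun r =>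
    (isCompact_closedBall w0 r).inter_left cG
  have hbc : ∀ r, BConv (G ∩ closedBall w0 r) := fun r => hG.inter (bconv_closedBall hPT w0 r)
  obtain ⟨k0, hk0, hmin⟩ := (hcomp (R + 1)).exists_isMinOn
    ⟨w0, hw0, mem_closedBall_self (by linarith)⟩ (hf.norm.continuousOn)
  have hη : 0 < ‖f k0‖ := norm_pos_iff.2 (hfG k0 hk0.1)
  obtain ⟨ε, hε, huc⟩ := Metric.uniformContinuousOn_iff.1
    ((hcomp (R + 1)).uniformContinuousOn_of_continuous hf.continuousOn) ‖f k0‖ hη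
  set δ := min (ε / 3) 1 with hδdef
  have hδ : 0 < δ := lt_min (by linarith) one_pos
  have hδ1 : δ ≤ 1 := min_le_right _ _
  have hδε : 2 * δ < ε := by have := min_le_left (ε / 3) 1; linarith
  -- logs on small sets
  have small : ∀ k ∈ G ∩ closedBall w0 (R + 1),
      HasLog f ((G ∩ closedBall w0 (R + 1)) ∩ closedBall k (2 * δ)) := by
    intro k hk
    have hk0' : f k ≠ 0 := hfG k hk.1
    have hsl : ∀ y ∈ (G ∩ closedBall w0 (R + 1)) ∩ closedBall k (2 * δ),
        f y / f k ∈ Complex.slitPlane := by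
      intro y hy
      have h1 : dist (f y) (f k) < ‖f k0‖ := huc y hy.1 k hk (lt_of_le_of_lt hy.2 hδε)
      have h2 : ‖f k0‖ ≤ ‖f k‖ := hmin hk
      have h3 : ‖f y / f k - 1‖ < 1 := by
        rw [div_sub_one hk0', norm_div, div_lt_one (norm_pos_iff.2 hk0'), ← dist_eq_norm]
        linarith
      have := Complex.mem_slitPlane_of_norm_lt_one h3
      simpa using this
    refine ⟨fun y => Complex.log (f y / f k) + Complex.log (f k), ?_, ?_⟩
    · exact ((hf.continuousOn.div_const _).clog hsl).add continuousOn_const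
    · intro y hy
      rw [Complex.exp_add, Complex.exp_log (Complex.slitPlane_ne_zero (hsl y hy)),
        Complex.exp_log hk0', div_mul_cancel₀ _ hk0']
  have step : ∀ r, 0 ≤ r → r + δ ≤ R + 1 → HasLog f (G ∩ closedBall w0 r) →
      HasLog f (G ∩ closedBall w0 (r + δ)) := by
    intro r hr hrR hlog
    obtain ⟨t, htK, htf, hcov⟩ := (hcomp r).finite_cover_balls hδ
    have main : ∀ s : Finset X, (∀ k ∈ s, k ∈ G ∩ closedBall w0 r) →
        HasLog f ((G ∩ closedBall w0 r) ∪
          ⋃ k ∈ s, (G ∩ closedBall w0 (r + δ)) ∩ closedBall k (2 * δ)) := by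
      classical
      intro s
      induction s using Finset.induction_on with
      | empty => intro _; simpa using hlog
      | insert k s hks ih =>
        intro hs
        have hk := hs k (Finset.mem_insert_self _ _)
        have hs' : ∀ i ∈ s, i ∈ G ∩ closedBall w0 r := fun i hi =>
          hs i (Finset.mem_insert_of_mem hi)
        have ih' := ih hs'
        have sub1 : closedBall w0 (r + δ) ⊆ closedBall w0 (R + 1) :=
          closedBall_subset_closedBall hrR
        have sub0 : G ∩ closedBall w0 r ⊆ G ∩ closedBall w0 (r + δ) :=
          inter_subset_inter_right _ (closedBall_subset_closedBall (by linarith))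
        have hD : HasLog f ((G ∩ closedBall w0 (r + δ)) ∩ closedBall k (2 * δ)) :=
          (small k ⟨hk.1, sub1 (sub0 hk).2⟩).mono
            (inter_subset_inter_left _ (inter_subset_inter_right _ sub1))
        have hclD : ∀ i, IsClosed ((G ∩ closedBall w0 (r + δ)) ∩ closedBall i (2 * δ)) :=
          fun i => (cG.inter isClosed_closedBall).inter isClosed_closedBall
        have hclA : IsClosed ((G ∩ closedBall w0 r) ∪
            ⋃ k ∈ s, (G ∩ closedBall w0 (r + δ)) ∩ closedBall k (2 * δ)) := by
          apply (cG.inter isClosed_closedBall).union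
          exact s.finite_toSet.isClosed_biUnion (fun i _ => hclD i)
        have hbD : ∀ i, BConv ((G ∩ closedBall w0 (r + δ)) ∩ closedBall i (2 * δ)) :=
          fun i => (hbc _).inter (bconv_closedBall hPT _ _)
        have := ih'.union hD hclA (hclD k) (by
          have hkD : k ∈ (G ∩ closedBall w0 (r + δ)) ∩ closedBall k (2 * δ) :=
            ⟨sub0 hk, mem_closedBall_self (by linarith)⟩
          have p0 := ((hbc r).inter (hbD k)).preconn hgeo
          apply isPreconnected_of_forall k
          rintro y ⟨hy | hy, hyD⟩
          · exact ⟨_, inter_subset_inter_left _ subset_union_left, ⟨hk, hkD⟩, ⟨hy, hyD⟩, p0⟩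
          · rw [mem_iUnion₂] at hy
            obtain ⟨i, hi, hyi⟩ := hy
            obtain ⟨m, hm1, hm2⟩ := exists_mid hgeo i k
            have hik : dist i k ≤ 4 * δ := by
              have h1 : dist y i ≤ 2 * δ := hyi.2
              have h2 : dist y k ≤ 2 * δ := hyD.2
              have := dist_triangle i y k
              rw [dist_comm i y] at this; linarith
            have hmK : m ∈ G ∩ closedBall w0 r := hbc r i (hs' i hi) k hk m (by
              unfold Btw; linarith)
            have hmk : m ∈ closedBall k (2 * δ) := by rw [mem_closedBall]; linarith
            have hmi : m ∈ closedBall i (2 * δ) := by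
              rw [mem_closedBall, dist_comm]; linarith
            refine ⟨((G ∩ closedBall w0 r) ∩ ((G ∩ closedBall w0 (r + δ)) ∩ closedBall k (2 * δ)))
              ∪ (((G ∩ closedBall w0 (r + δ)) ∩ closedBall i (2 * δ)) ∩
                ((G ∩ closedBall w0 (r + δ)) ∩ closedBall k (2 * δ))), ?_, Or.inl ⟨hk, hkD⟩,
                Or.inr ⟨hyi, hyD⟩, ?_⟩
            · rintro z (hz | hz)
              · exact ⟨Or.inl hz.1, hz.2⟩
              · exact ⟨Or.inr (mem_iUnion₂.2 ⟨i, hi, hz.1⟩), hz.2⟩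
            · exact p0.union m ⟨hmK, sub0 hmK, hmk⟩ ⟨⟨sub0 hmK, hmi⟩, sub0 hmK, hmk⟩
                (((hbD i).inter (hbD k)).preconn hgeo))
        refine this.mono ?_
        rintro z (hz | hz)
        · exact Or.inl (Or.inl hz)
        · rw [mem_iUnion₂] at hz
          obtain ⟨i, hi, hz⟩ := hz
          rcases Finset.mem_insert.1 hi with rfl | hi
          · exact Or.inr hz
          · exact Or.inl (Or.inr (mem_iUnion₂.2 ⟨i, hi, hz⟩))
    refine (main htf.toFinset (fun k hk => htK (htf.mem_toFinset.1 hk))).mono ?_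
    intro w hw
    have hwd : dist w w0 ≤ r + δ := hw.2
    obtain ⟨z, hz1, hz2⟩ := exists_point_at hgeo w0 w (s := min r (dist w0 w))
      (le_min hr dist_nonneg) (min_le_right _ _)
    have hzK : z ∈ G ∩ closedBall w0 r := by
      refine ⟨hG w0 hw0 w hw.1 z (by unfold Btw; linarith), ?_⟩
      rw [mem_closedBall, dist_comm, hz1]; exact min_le_left _ _
    have hzw : dist z w ≤ δ := by
      rw [hz2]
      rw [dist_comm] at hwd
      rcases min_cases r (dist w0 w) with h | h <;> linarith [h.1, h.2]
    have := hcov hzK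
    rw [mem_iUnion₂] at this
    obtain ⟨k, hk, hzk⟩ := this
    refine Or.inr (mem_iUnion₂.2 ⟨k, htf.mem_toFinset.2 hk, hw, ?_⟩)
    rw [mem_closedBall]
    rw [mem_ball] at hzk
    have := dist_triangle w z k
    rw [dist_comm w z] at this; linarith
  have ind : ∀ n : ℕ, n * δ ≤ R + 1 → HasLog f (G ∩ closedBall w0 (n * δ)) := by
    intro n
    induction n with
    | zero =>
      intro _
      refine ⟨fun y => Complex.log (f w0), continuousOn_const, ?_⟩
      intro y hy
      have : y = w0 := by simpa using hy.2
      rw [this, Complex.exp_log (hfG w0 hw0)]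
    | succ n ih =>
      intro h
      have e : ((n + 1 : ℕ) : ℝ) * δ = n * δ + δ := by push_cast; ring
      rw [e] at h ⊢
      exact step _ (by positivity) h (ih (by linarith))
  have hn1 : R ≤ ⌈R / δ⌉₊ * δ := by
    have := Nat.le_ceil (R / δ)
    rwa [div_le_iff₀ hδ] at this
  have hn2 : ⌈R / δ⌉₊ * δ ≤ R + 1 := by
    have := (Nat.ceil_lt_add_one (a := R / δ) (by positivity)).le
    have h2 := mul_le_mul_of_nonneg_right this hδ.le
    rw [add_mul, div_mul_cancel₀ _ hδ.ne'] at h2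
    linarith
  exact (ind _ hn2).mono (inter_subset_inter_right _ (closedBall_subset_closedBall hn1))

end logb
end PTS

namespace PTS

lemma hasLog_plane {F : ℝ × ℝ → ℂ} (hF : Continuous F) (h0 : ∀ z, F z ≠ 0) :
    HasLog F univ := by
  obtain ⟨l, ⟨-, hl⟩, -⟩ := Complex.isCoveringMapOn_exp.existsUnique_continuousMap_lifts
    (⟨F, hF⟩ : C(ℝ × ℝ, ℂ)) (a₀ := (0, 0)) (Complex.exp_log (h0 (0, 0))) (fun z => h0 z)
  exact ⟨l, l.continuous.continuousOn, fun y _ => congrFun hl y⟩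

/-- Coordinates on a strip bounded by two parallel lines. -/
structure Strip {X : Type*} [MetricSpace X] (p q : X → ℝ) (c₀ c₁ : ℝ → X) : Prop where
  hPT : Ptolemaic X
  hgeo : GeodesicMetricSpace X
  h0 : IsGeodesicLine c₀
  h1 : IsGeodesicLine c₁
  par : ParallelLines c₀ c₁
  pc : Continuous p
  qc : Continuous q
  q0 : ∀ y, 0 ≤ q y
  q1 : ∀ y, q y ≤ 1
  inj : ∀ y z, p y = p z → q y = q z → y = z
  comp : ∀ M : ℝ, IsCompact {y | |p y| ≤ M}
  m0 : ∀ s, q (c₀ s) = 0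
  m1 : ∀ s, q (c₁ s) = 1
  surj : ∀ a, ∃ s, p (c₀ s) = a

section strip
variable {X : Type*} [MetricSpace X] {p q : X → ℝ} {c₀ c₁ : ℝ → X}

lemma Strip.neg (S : Strip p q c₀ c₁) : Strip (fun y => - p y) q c₀ c₁ where
  hPT := S.hPT
  hgeo := S.hgeo
  h0 := S.h0
  h1 := S.h1
  par := S.par
  pc := S.pc.neg
  qc := S.qc
  q0 := S.q0
  q1 := S.q1
  inj := fun y z h h' => S.inj y z (neg_injective h) h'
  comp := fun M => by simpa only [abs_neg] using S.comp M
  m0 := S.m0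
  m1 := S.m1
  surj := fun a => by obtain ⟨s, hs⟩ := S.surj (-a); exact ⟨s, by rw [hs, neg_neg]⟩

lemma pre_side {A : Set X} (hA : IsPreconnected A) {p : X → ℝ} (pc : Continuous p) {M : ℝ}
    (hM0 : 0 ≤ M) (hM : ∀ y ∈ A, M < |p y|) : (∀ y ∈ A, M < p y) ∨ (∀ y ∈ A, p y < -M) := by
  by_contra hcon
  push Not at hcon
  obtain ⟨⟨y, hy, hy'⟩, z, hz, hz'⟩ := hcon
  have h1 := hM y hy
  have h2 := hM z hz
  have h1' : p y < -M := by
    rcases lt_abs.1 h1 with h | h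
    · linarith
    · linarith
  have h2' : M < p z := by
    rcases lt_abs.1 h2 with h | h
    · exact h
    · linarith
  · have := (hA.image p pc.continuousOn).ordConnected.out (mem_image_of_mem p hy)
      (mem_image_of_mem p hz)
    have hz0 : (0:ℝ) ∈ Icc (p y) (p z) := ⟨by linarith, by linarith⟩
    obtain ⟨w, hw, hw0⟩ := this hz0
    have := hM w hw
    rw [hw0, abs_zero] at this
    linarith

lemma Strip.not_bdd_below (S : Strip p q c₀ c₁) {B M : ℝ} (h1 : ∀ s, B < s → M ≤ p (c₀ s))
    (h2 : ∀ s, s < -B → M ≤ p (c₀ s)) : False := by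
  obtain ⟨m, hm⟩ := (isCompact_Icc (a := -B) (b := B)).bddBelow_image
    (S.pc.comp (line_cont S.h0)).continuousOn
  obtain ⟨s, hs⟩ := S.surj (min m M - 1)
  have a1 := min_le_left m M
  have a2 := min_le_right m M
  by_cases hb : B < s
  · have := h1 s hb; linarith
  · by_cases hb' : s < -B
    · have := h2 s hb'; linarith
    · have : m ≤ p (c₀ s) := hm ⟨s, ⟨not_lt.1 hb', not_lt.1 hb⟩, rfl⟩
      linarith

lemma Strip.sides (S : Strip p q c₀ c₁) {M : ℝ} (hM0 : 0 ≤ M) : ∃ B,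
    ((∀ y, bus c₀ y < -B → M < p y) ∧ (∀ y, bus (rev c₀) y < -B → p y < -M)) ∨
    ((∀ y, bus c₀ y < -B → p y < -M) ∧ (∀ y, bus (rev c₀) y < -B → M < p y)) := by
  obtain ⟨m1, hm1⟩ := (S.comp M).bddBelow_image (bus_cont S.h0).continuousOn
  obtain ⟨m2, hm2⟩ := (S.comp M).bddBelow_image (bus_cont (line_rev S.h0)).continuousOn
  refine ⟨max (-m1) (-m2), ?_⟩
  have l1 := le_max_left (-m1) (-m2)
  have l2 := le_max_right (-m1) (-m2)
  set B := max (-m1) (-m2)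
  have s1 := pre_side (((bus_bcvx S.hPT S.h0).lt_set (-B)).preconn S.hgeo) S.pc hM0 (by
    intro y hy
    by_contra hc
    have : m1 ≤ bus c₀ y := hm1 ⟨y, not_lt.1 hc, rfl⟩
    rw [mem_ofPred_eq] at hy
    linarith)
  have s2 := pre_side (((bus_bcvx S.hPT (line_rev S.h0)).lt_set (-B)).preconn S.hgeo) S.pc
    hM0 (by
    intro y hy
    by_contra hc
    have : m2 ≤ bus (rev c₀) y := hm2 ⟨y, not_lt.1 hc, rfl⟩
    rw [mem_ofPred_eq] at hy
    linarith)
  have e1 : ∀ s, bus c₀ (c₀ s) = -s := bus_self S.h0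
  have e2 : ∀ s, bus (rev c₀) (c₀ s) = s := by
    intro s
    have := bus_self (line_rev S.h0) (-s)
    simpa [rev] using this
  rcases s1 with s1 | s1 <;> rcases s2 with s2 | s2
  · exfalso
    refine S.not_bdd_below (B := B) (M := M) (fun s hs => (s1 _ ?_).le) (fun s hs => (s2 _ ?_).le)
    · rw [mem_ofPred_eq, e1]; linarith
    · rw [mem_ofPred_eq, e2]; linarith
  · exact Or.inl ⟨s1, s2⟩
  · exact Or.inr ⟨s1, s2⟩
  · exfalso
    refine S.neg.not_bdd_below (B := B) (M := M) (fun s hs => ?_) (fun s hs => ?_)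
    · have := s1 (c₀ s) (by rw [mem_ofPred_eq, e1]; linarith)
      linarith
    · have := s2 (c₀ s) (by rw [mem_ofPred_eq, e2]; linarith)
      linarith

lemma Strip.bp0 (S : Strip p q c₀ c₁) (s : ℝ) : bus c₀ (c₀ s) = -s := bus_self S.h0 s

lemma Strip.bm0 (S : Strip p q c₀ c₁) (s : ℝ) : bus (rev c₀) (c₀ s) = s := by
  have := bus_self (line_rev S.h0) (-s)
  simpa [rev] using this

lemma bus_rev_parallel (hPT : Ptolemaic X) {c c' : ℝ → X} (hc : IsGeodesicLine c)
    (hc' : IsGeodesicLine c') (hp : ParallelLines c c') (s : ℝ) :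
    bus (rev c) (c' s) = bus (rev c) (c' 0) + s := by
  have := bus_parallel hPT (line_rev hc) (line_rev hc') (par_rev hp) (-s)
  simp only [rev, neg_neg, neg_zero] at this
  linarith

lemma Strip.G_core [ProperSpace X] (S : Strip p q c₀ c₁) (x : X)
    (hx : ¬ (bus c₀ x + bus (rev c₀) x ≤ 0)) {B : ℝ}
    (H1 : ∀ y, bus c₀ y < -B → |p x| < p y) (H2 : ∀ y, bus (rev c₀) y < -B → p y < -|p x|) :
    False := by
  set α := bus c₀ (c₁ 0) with hα
  set β := bus (rev c₀) (c₁ 0) with hβ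
  have hαβ : α + β = 0 := bus_parallel_sum S.hPT S.h0 S.h1 S.par
  have p1 : ∀ s, bus c₀ (c₁ s) = α - s := bus_parallel S.hPT S.h0 S.h1 S.par
  have n1 : ∀ s, bus (rev c₀) (c₁ s) = β + s := bus_rev_parallel S.hPT S.h0 S.h1 S.par
  have hcv : BCvx (fun y => bus c₀ y + bus (rev c₀) y) := by
    intro a z b hb
    have h1 := bus_bcvx S.hPT S.h0 a z b hb
    have h2 := bus_bcvx S.hPT (line_rev S.h0) a z b hb
    linarith
  set G : Set X := {y | bus c₀ y + bus (rev c₀) y ≤ 0} with hGdef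
  have hG : BConv G := hcv.le_set 0
  have cG : IsClosed G := isClosed_le ((bus_cont S.h0).add (bus_cont (line_rev S.h0)))
    continuous_const
  have g0 : ∀ s, c₀ s ∈ G := fun s => by
    rw [hGdef, mem_ofPred_eq, S.bp0, S.bm0]; linarith
  have g1 : ∀ s, c₁ s ∈ G := fun s => by
    rw [hGdef, mem_ofPred_eq, p1, n1]; linarith
  set T := |B| + |α| + 1 with hT
  have hT1 := le_abs_self B
  have hT2 := le_abs_self α
  have hT3 := neg_abs_le α
  have hT0 : 0 < T := by positivity
  obtain ⟨σ, σc, σ0, σ1, σb, -⟩ := geo_cont S.hgeo (c₀ T) (c₁ T)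
  obtain ⟨τ, τc, τ0, τ1, τb, -⟩ := geo_cont S.hgeo (c₀ (-T)) (c₁ (-T))
  set f : X → ℂ := fun w => ((p w - p x : ℝ) : ℂ) + ((q w - q x : ℝ) : ℂ) * Complex.I with hf
  have fre : ∀ w, (f w).re = p w - p x := fun w => by simp [hf]
  have fim : ∀ w, (f w).im = q w - q x := fun w => by simp [hf]
  have fc : Continuous f := by
    have := S.pc; have := S.qc
    fun_prop
  have f0 : ∀ y ∈ G, f y ≠ 0 := by
    intro y hy h
    have h1 := fre y
    have h2 := fim y
    rw [h] at h1 h2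
    simp only [Complex.zero_re, Complex.zero_im] at h1 h2
    have : y = x := S.inj y x (by linarith) (by linarith)
    rw [this] at hy
    exact hx hy
  have c0c := line_cont S.h0
  have c1c := line_cont S.h1
  have kb : IsCompact (c₀ '' Icc (-T) T) := isCompact_Icc.image c0c
  have kt : IsCompact (c₁ '' Icc (-T) T) := isCompact_Icc.image c1c
  have kr : IsCompact (σ '' Icc 0 1) := isCompact_Icc.image σc
  have kl : IsCompact (τ '' Icc 0 1) := isCompact_Icc.image τc
  obtain ⟨R, hR⟩ := (((kb.union kt).union (kr.union kl)).isBounded).subset_closedBall (c₀ 0)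
  have sub : ∀ Q : Set X, Q ⊆ (c₀ '' Icc (-T) T ∪ c₁ '' Icc (-T) T) ∪
      (σ '' Icc 0 1 ∪ τ '' Icc 0 1) → Q ⊆ G → Q ⊆ G ∩ closedBall (c₀ 0) (max R 0) :=
    fun Q h1 h2 y hy => ⟨h2 hy, closedBall_subset_closedBall (le_max_left _ _) (hR (h1 hy))⟩
  have hlog := log_on_bconv S.hPT S.hgeo cG hG fc f0 (g0 0) (le_max_right R 0)
  have mT : T ∈ Icc (-T) T := ⟨by linarith, le_rfl⟩
  have mT' : -T ∈ Icc (-T) T := ⟨le_rfl, by linarith⟩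
  have i0 : (0:ℝ) ∈ Icc (0:ℝ) 1 := by simp
  have i1 : (1:ℝ) ∈ Icc (0:ℝ) 1 := by simp
  have hxp := neg_abs_le (p x)
  have hxp' := le_abs_self (p x)
  refine no_log (Qr := σ '' Icc 0 1) (Qt := c₁ '' Icc (-T) T) (Ql := τ '' Icc 0 1)
    (Qb := c₀ '' Icc (-T) T) hlog fc.continuousOn
    (sub _ ?_ ?_) (sub _ ?_ ?_) (sub _ ?_ ?_) (sub _ ?_ ?_)
    (isPreconnected_Icc.image _ σc.continuousOn) (isPreconnected_Icc.image _ c1c.continuousOn)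
    (isPreconnected_Icc.image _ τc.continuousOn) (isPreconnected_Icc.image _ c0c.continuousOn)
    ?_ ?_ ?_ ?_ ⟨c₁ T, ⟨1, i1, σ1⟩, ⟨T, mT, rfl⟩⟩ ⟨c₁ (-T), ⟨-T, mT', rfl⟩, ⟨1, i1, τ1⟩⟩
    ⟨c₀ (-T), ⟨0, i0, τ0⟩, ⟨-T, mT', rfl⟩⟩ ⟨c₀ T, ⟨T, mT, rfl⟩, ⟨0, i0, σ0⟩⟩
  · exact fun y hy => Or.inr (Or.inl hy)
  · rintro _ ⟨t, -, rfl⟩; exact hG _ (g0 T) _ (g1 T) _ (σb t)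
  · exact fun y hy => Or.inl (Or.inr hy)
  · rintro _ ⟨t, -, rfl⟩; exact g1 t
  · exact fun y hy => Or.inr (Or.inr hy)
  · rintro _ ⟨t, -, rfl⟩; exact hG _ (g0 (-T)) _ (g1 (-T)) _ (τb t)
  · exact fun y hy => Or.inl (Or.inl hy)
  · rintro _ ⟨t, -, rfl⟩; exact g0 t
  · rintro _ ⟨t, -, rfl⟩
    have := H1 (σ t) ((bus_bcvx S.hPT S.h0).lt_set (-B) (c₀ T) (by
      rw [mem_ofPred_eq, S.bp0]; linarith [abs_nonneg α]) (c₁ T) (by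
      rw [mem_ofPred_eq, p1]; linarith) _ (σb t))
    rw [fre]; linarith
  · rintro _ ⟨t, -, rfl⟩
    have := H2 (τ t) ((bus_bcvx S.hPT (line_rev S.h0)).lt_set (-B) (c₀ (-T)) (by
      rw [mem_ofPred_eq, S.bm0]; linarith [abs_nonneg α]) (c₁ (-T)) (by
      rw [mem_ofPred_eq, n1]; linarith) _ (τb t))
    rw [fre]; linarith
  · rintro _ ⟨t, -, rfl⟩
    rw [fim, S.m1]; linarith [S.q1 x]
  · rintro _ ⟨t, -, rfl⟩
    rw [fim, S.m0]; linarith [S.q0 x]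

lemma Strip.sum_zero [ProperSpace X] (S : Strip p q c₀ c₁) (x : X) :
    bus c₀ x = - bus (rev c₀) x := by
  have h1 := bus_add_nonneg S.h0 x
  by_contra hne
  have hx : ¬ (bus c₀ x + bus (rev c₀) x ≤ 0) := fun h => hne (by linarith)
  obtain ⟨B, ⟨H1, H2⟩ | ⟨H1, H2⟩⟩ := S.sides (abs_nonneg (p x))
  · exact S.G_core x hx H1 H2
  · refine S.neg.G_core x hx (B := B) (fun y hy => ?_) (fun y hy => ?_)
    · have := H1 y hy; rw [abs_neg]; linarith
    · have := H2 y hy; rw [abs_neg]; linarith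

lemma up_ray [ProperSpace X] (hgeo : GeodesicMetricSpace X) {c : ℝ → X} (hc : IsGeodesicLine c)
    (y : X) : ∃ r : ℝ → X, r 0 = y ∧ (∀ s, 0 ≤ s → ∀ t, 0 ≤ t → dist (r s) (r t) ≤ |s - t|) ∧
      ∀ s, 0 ≤ s → bus c (r s) ≤ bus c y - s := by
  have hg : ∀ n : ℕ, ∃ g : ℝ → X, (∀ s t, 0 ≤ s → s ≤ dist y (c n) → 0 ≤ t → t ≤ dist y (c n) →
      dist (g s) (g t) ≤ |s - t|) ∧ g 0 = y ∧ (∀ s, 0 ≤ s → s ≤ dist y (c n) →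
      dist (g s) (c n) = dist y (c n) - s) := by
    intro n
    by_cases hxy : y = c n
    · refine ⟨fun _ => y, fun s t _ _ _ _ => by rw [dist_self]; exact abs_nonneg _, rfl, ?_⟩
      intro s h0 h1
      rw [hxy, dist_self] at *
      linarith
    · have hD : 0 < dist y (c n) := dist_pos.2 hxy
      obtain ⟨σ, e0, e1, hσ⟩ := hgeo y (c n)
      have hm : ∀ s, 0 ≤ s → s ≤ dist y (c n) → s / dist y (c n) ∈ Icc (0:ℝ) 1 :=
        fun s h0 h1 => ⟨by positivity, (div_le_one hD).2 h1⟩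
      refine ⟨fun s => σ (s / dist y (c n)), ?_, by simp [e0], ?_⟩
      · intro s t h0 h1 h2 h3
        rw [hσ _ (hm s h0 h1) _ (hm t h2 h3), ← sub_div, abs_div, abs_of_pos hD,
          mul_div_cancel₀ _ hD.ne']
      · intro s h0 h1
        have := hσ _ (hm s h0 h1) 1 (by simp)
        rw [e1, abs_of_nonpos (by linarith [(hm s h0 h1).2])] at this
        rw [this]; field_simp; ring
  choose g hg1 hg2 hg3 using hg
  have hev : ∀ s : ℝ, ∀ᶠ n : ℕ in (hyperfilter ℕ : Filter ℕ), s ≤ dist y (c n) := by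
    intro s
    have : ∀ᶠ n : ℕ in atTop, s + dist y (c 0) ≤ (n : ℝ) :=
      tendsto_natCast_atTop_atTop.eventually_ge_atTop _
    have h2 : ∀ᶠ n : ℕ in atTop, s ≤ dist y (c n) := by
      filter_upwards [this] with n hn
      have h1 := dist_triangle (c 0) y (c n)
      rw [hc, dist_comm (c 0) y, zero_sub, abs_neg, abs_of_nonneg (Nat.cast_nonneg n)] at h1
      linarith
    exact h2.filter_mono Nat.hyperfilter_le_atTop
  have hlim : ∀ s : ℝ, ∃ z, 0 ≤ s → Tendsto (fun n => g n s) (hyperfilter ℕ : Filter ℕ) (𝓝 z) := by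
    intro s
    by_cases hs : 0 ≤ s
    · obtain ⟨z, -, hz⟩ := (isCompact_closedBall y s).ultrafilter_le_nhds
        ((hyperfilter ℕ).map (fun n => g n s)) (by
          rw [le_principal_iff]
          show ∀ᶠ n in (hyperfilter ℕ : Filter ℕ), g n s ∈ closedBall y s
          filter_upwards [hev s] with n hn
          have := hg1 n s 0 hs hn le_rfl dist_nonneg
          rw [hg2, sub_zero, abs_of_nonneg hs] at this
          exact this)
      exact ⟨z, fun _ => hz⟩
    · exact ⟨y, fun h => absurd h hs⟩
  choose r hr using hlim
  refine ⟨r, ?_, ?_, ?_⟩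
  · refine tendsto_nhds_unique (hr 0 le_rfl) ?_
    simp only [hg2]; exact tendsto_const_nhds
  · intro s hs t ht
    refine le_of_tendsto ((hr s hs).dist (hr t ht)) ?_
    filter_upwards [hev s, hev t] with n h1 h2 using hg1 n s t hs h1 ht h2
  · intro s hs
    have h1 := ((bus_cont hc).tendsto (r s)).comp (hr s hs)
    have h2 : Tendsto (fun n : ℕ => dist y (c n) - n - s) (hyperfilter ℕ : Filter ℕ)
        (𝓝 (bus c y - s)) :=
      (((bus_tendsto hc y).comp tendsto_natCast_atTop_atTop).mono_left
        Nat.hyperfilter_le_atTop).sub_const s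
    refine le_of_tendsto_of_tendsto h1 h2 ?_
    filter_upwards [hev s] with n hn
    have := bus_le hc (g n s) n
    rw [hg3 n s hs hn] at this
    simp only [Function.comp]; linarith

/-- `γ` is a line along which `b` grows at unit speed. -/
def Vert (b : X → ℝ) (γ : ℝ → X) : Prop :=
  (∀ s t, dist (γ s) (γ t) = |s - t|) ∧ ∀ s, b (γ s) = b (γ 0) + s

lemma Strip.exists_vert [ProperSpace X] (S : Strip p q c₀ c₁) (y : X) :
    ∃ γ : ℝ → X, γ 0 = y ∧ Vert (bus (rev c₀)) γ := by
  obtain ⟨r, r0, rd, rb⟩ := up_ray S.hgeo S.h0 y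
  obtain ⟨d, d0, dd, db⟩ := up_ray S.hgeo (line_rev S.h0) y
  have hlip := bus_lip (line_rev S.h0)
  have hrb : ∀ s, 0 ≤ s → bus (rev c₀) (r s) = bus (rev c₀) y + s := by
    intro s hs
    have h1 := rb s hs
    rw [S.sum_zero, S.sum_zero] at h1
    have h2 := hlip (r s) y
    have h3 := rd s hs 0 le_rfl
    rw [r0, sub_zero, abs_of_nonneg hs] at h3
    linarith
  have hdb : ∀ s, 0 ≤ s → bus (rev c₀) (d s) = bus (rev c₀) y - s := by
    intro s hs
    have h1 := db s hs
    have h2 := hlip y (d s)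
    have h3 := dd 0 le_rfl s hs
    rw [d0, zero_sub, abs_neg, abs_of_nonneg hs] at h3
    linarith
  set γ : ℝ → X := fun s => if 0 ≤ s then r s else d (-s) with hγ
  have γ1 : ∀ s, 0 ≤ s → γ s = r s := fun s hs => by simp [hγ, hs]
  have γ2 : ∀ s, s < 0 → γ s = d (-s) := fun s hs => by simp [hγ, not_le.2 hs]
  have γ0 : γ 0 = y := by rw [γ1 0 le_rfl, r0]
  have γb : ∀ s, bus (rev c₀) (γ s) = bus (rev c₀) y + s := by
    intro s
    rcases le_or_gt 0 s with h | h
    · rw [γ1 s h, hrb s h]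
    · rw [γ2 s h, hdb _ (by linarith)]; ring
  have γle : ∀ s t, s ≤ t → dist (γ s) (γ t) ≤ t - s := by
    intro s t hst
    rcases le_or_gt 0 s with h | h
    · rw [γ1 s h, γ1 t (by linarith)]
      have := rd s h t (by linarith)
      rwa [abs_of_nonpos (by linarith), neg_sub] at this
    · rcases le_or_gt 0 t with h' | h'
      · rw [γ2 s h, γ1 t h']
        have a1 := dd (-s) (by linarith) 0 le_rfl
        have a2 := rd 0 le_rfl t h'
        rw [d0, sub_zero, abs_of_nonneg (by linarith)] at a1
        rw [r0, zero_sub, abs_neg, abs_of_nonneg h'] at a2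
        have := dist_triangle (d (-s)) y (r t)
        linarith
      · rw [γ2 s h, γ2 t h']
        have := dd (-s) (by linarith) (-t) (by linarith)
        rw [abs_of_nonneg (by linarith)] at this
        linarith
  have γge : ∀ s t, t - s ≤ dist (γ s) (γ t) := by
    intro s t
    have := hlip (γ t) (γ s)
    rw [γb, γb, dist_comm] at this
    linarith
  refine ⟨γ, γ0, ?_, fun s => by rw [γb, γ0]⟩
  intro s t
  rcases le_total s t with h | h
  · rw [abs_of_nonpos (by linarith)]; linarith [γle s t h, γge s t]
  · rw [abs_of_nonneg (by linarith), dist_comm]; linarith [γle t s h, γge t s]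

lemma Strip.affine [ProperSpace X] (S : Strip p q c₀ c₁) {x z y : X} (hb : Btw x z y) :
    dist x y * bus (rev c₀) z = dist z y * bus (rev c₀) x + dist x z * bus (rev c₀) y := by
  have h1 := bus_bcvx S.hPT S.h0 x z y hb
  have h2 := bus_bcvx S.hPT (line_rev S.h0) x z y hb
  rw [S.sum_zero, S.sum_zero, S.sum_zero] at h1
  linarith

lemma Strip.level [ProperSpace X] (S : Strip p q c₀ c₁) {x z y : X} (hb : Btw x z y)
    (h : bus (rev c₀) x = bus (rev c₀) y) : bus (rev c₀) z = bus (rev c₀) x := by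
  by_cases hxy : x = y
  · subst hxy; rw [btw_self hb]
  · have h1 := S.affine hb
    have hb' := hb
    unfold Btw at hb'
    rw [← h, ← add_mul, add_comm (dist z y), hb'] at h1
    exact mul_left_cancel₀ (dist_ne_zero.2 hxy) h1

lemma Strip.slice_core [ProperSpace X] (S : Strip p q c₀ c₁) {y : X} {σ γ : ℝ → X} {u v : ℝ}
    (σc : Continuous σ) (σ0 : σ 0 = c₀ u) (σ1 : σ 1 = c₁ v)
    (σb : ∀ t, bus (rev c₀) (σ t) = bus (rev c₀) y)
    (γ0 : γ 0 = y) (hγ : Vert (bus (rev c₀)) γ) (hy : ∀ t, y ≠ σ t) {B M : ℝ}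
    (hM : ∀ t ∈ Icc (0:ℝ) 1, |p (σ t)| ≤ M)
    (H1 : ∀ y, bus c₀ y < -B → M < p y) (H2 : ∀ y, bus (rev c₀) y < -B → p y < -M) :
    False := by
  set F : ℝ × ℝ → ℂ := fun z => ((p (γ z.1) - p (σ z.2) : ℝ) : ℂ) +
    ((q (γ z.1) - q (σ z.2) : ℝ) : ℂ) * Complex.I with hF
  have fre : ∀ w, (F w).re = p (γ w.1) - p (σ w.2) := fun w => by simp [hF]
  have fim : ∀ w, (F w).im = q (γ w.1) - q (σ w.2) := fun w => by simp [hF]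
  have γc : Continuous γ := line_cont hγ.1
  have Fc : Continuous F := by
    have := S.pc; have := S.qc
    fun_prop
  have F0 : ∀ z, F z ≠ 0 := by
    intro z h
    have h1 := fre z
    have h2 := fim z
    rw [h] at h1 h2
    simp only [Complex.zero_re, Complex.zero_im] at h1 h2
    have e : γ z.1 = σ z.2 := S.inj _ _ (by linarith) (by linarith)
    have e2 := hγ.2 z.1
    rw [e, σb, γ0] at e2
    have : z.1 = 0 := by linarith
    rw [this, γ0] at e
    exact hy _ e
  set T := |B| + |bus (rev c₀) y| + 1 with hT
  have hT1 := le_abs_self B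
  have hT2 := le_abs_self (bus (rev c₀) y)
  have hT3 := neg_abs_le (bus (rev c₀) y)
  have hT0 : 0 < T := by positivity
  have mT : T ∈ Icc (-T) T := ⟨by linarith, le_rfl⟩
  have mT' : -T ∈ Icc (-T) T := ⟨le_rfl, by linarith⟩
  have i0 : (0:ℝ) ∈ Icc (0:ℝ) 1 := by simp
  have i1 : (1:ℝ) ∈ Icc (0:ℝ) 1 := by simp
  refine no_log (Qr := {T} ×ˢ Icc 0 1) (Qt := Icc (-T) T ×ˢ {0}) (Ql := {-T} ×ˢ Icc 0 1)
    (Qb := Icc (-T) T ×ˢ {1}) (hasLog_plane Fc F0) Fc.continuousOn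
    (subset_univ _) (subset_univ _) (subset_univ _) (subset_univ _)
    (isPreconnected_singleton.prod isPreconnected_Icc)
    (isPreconnected_Icc.prod isPreconnected_singleton)
    (isPreconnected_singleton.prod isPreconnected_Icc)
    (isPreconnected_Icc.prod isPreconnected_singleton) ?_ ?_ ?_ ?_
    ⟨(T, 0), ⟨rfl, i0⟩, ⟨mT, rfl⟩⟩ ⟨(-T, 0), ⟨mT', rfl⟩, ⟨rfl, i0⟩⟩
    ⟨(-T, 1), ⟨rfl, i1⟩, ⟨mT', rfl⟩⟩ ⟨(T, 1), ⟨mT, rfl⟩, ⟨rfl, i1⟩⟩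
  · rintro ⟨s, t⟩ ⟨hs, ht⟩
    rw [mem_singleton_iff] at hs
    simp only at hs ht
    subst hs
    rw [fre]
    have := H1 (γ T) (by rw [S.sum_zero, hγ.2, γ0]; linarith)
    have := le_abs_self (p (σ t))
    have := hM t ht
    simp only; linarith
  · rintro ⟨s, t⟩ ⟨hs, ht⟩
    rw [mem_singleton_iff] at hs
    simp only at hs ht
    subst hs
    rw [fre]
    have := H2 (γ (-T)) (by rw [hγ.2, γ0]; linarith)
    have := neg_abs_le (p (σ t))
    have := hM t ht
    simp only; linarith
  · rintro ⟨s, t⟩ ⟨hs, ht⟩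
    rw [mem_singleton_iff] at ht
    simp only at hs ht
    subst ht
    rw [fim]
    simp only
    rw [σ0, S.m0]; linarith [S.q0 (γ s)]
  · rintro ⟨s, t⟩ ⟨hs, ht⟩
    rw [mem_singleton_iff] at ht
    simp only at hs ht
    subst ht
    rw [fim]
    simp only
    rw [σ1, S.m1]; linarith [S.q1 (γ s)]

/-- Each level set of `b` is the geodesic joining the two boundary lines. -/
lemma Strip.slice [ProperSpace X] (S : Strip p q c₀ c₁) {y : X} {σ : ℝ → X} {u v : ℝ}
    (σc : Continuous σ) (σ0 : σ 0 = c₀ u) (σ1 : σ 1 = c₁ v)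
    (σb : ∀ t, bus (rev c₀) (σ t) = bus (rev c₀) y) : ∃ t, y = σ t := by
  by_contra hcon
  push Not at hcon
  obtain ⟨γ, γ0, hγ⟩ := S.exists_vert y
  obtain ⟨M, hM⟩ := (isCompact_Icc (a := (0:ℝ)) (b := 1)).bddAbove_image
    ((S.pc.comp σc).abs.continuousOn)
  have hM' : ∀ t ∈ Icc (0:ℝ) 1, |p (σ t)| ≤ M := fun t ht => hM ⟨t, ht, rfl⟩
  obtain ⟨B, ⟨H1, H2⟩ | ⟨H1, H2⟩⟩ := S.sides ((abs_nonneg _).trans (hM' 0 (by simp)))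
  · exact S.slice_core σc σ0 σ1 σb γ0 hγ hcon hM' H1 H2
  · refine S.neg.slice_core σc σ0 σ1 σb γ0 hγ hcon (B := B) (M := M)
      (fun t ht => by rw [abs_neg]; exact hM' t ht) (fun y hy => ?_) (fun y hy => ?_)
    · have := H1 y hy; linarith
    · have := H2 y hy; linarith

end strip
end PTS

namespace PTS

/-- Height function `b` with one-dimensional level sets parametrized by `ρ`. -/
structure Lev {X : Type*} [MetricSpace X] (b ρ : X → ℝ) : Prop where
  lip : ∀ x y, b x ≤ b y + dist x y
  rc : Continuous ρ
  vert : ∀ y, ∃ γ : ℝ → X, γ 0 = y ∧ Vert b γ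
  lev : ∀ x y, b x = b y → dist x y = |ρ x - ρ y|
  level : ∀ x z y, Btw x z y → b x = b y → b z = b x

section uniq
variable {X : Type*} [MetricSpace X] {b ρ : X → ℝ}

lemma vert_rev {γ : ℝ → X} (h : Vert b γ) : Vert (fun y => - b y) (rev γ) := by
  refine ⟨line_rev h.1, fun s => ?_⟩
  simp only [rev]
  rw [h.2, neg_zero]; ring

lemma Lev.neg (L : Lev b ρ) : Lev (fun y => - b y) ρ where
  lip := fun x y => by have := L.lip y x; rw [dist_comm] at this; linarith
  rc := L.rc
  vert := fun y => by
    obtain ⟨γ, h0, h⟩ := L.vert y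
    exact ⟨rev γ, by simp [rev, h0], vert_rev h⟩
  lev := fun x y h => L.lev x y (neg_injective h)
  level := fun x z y hb h => by
    have := L.level x z y hb (neg_injective h)
    simp only [this]

lemma Lev.push_aux (L : Lev b ρ) {c c' : ℝ → X} (hc : Vert b c) (hc' : Vert b c')
    (h0 : b (c 0) = b (c' 0)) {t k : ℝ} (hk : 0 ≤ k) {m : X} (hm : b m = b (c t))
    (hr1 : ρ (c t) ≤ ρ m) (hr2 : ρ m ≤ ρ (c' t)) :
    ∃ m', b m' = b m + k ∧ dist m m' ≤ k ∧
      dist (c (t + k)) m' + dist m' (c' (t + k)) = dist (c (t + k)) (c' (t + k)) := by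
  obtain ⟨γ, γ0, hγ⟩ := L.vert m
  have e1 : ∀ s, b (c s) = b (c 0) + s := hc.2
  have e2 : ∀ s, b (c' s) = b (c 0) + s := fun s => by rw [hc'.2, h0]
  have e3 : ∀ s, b (γ s) = b (c 0) + t + s := fun s => by rw [hγ.2, γ0, hm, e1]
  have γc := line_cont hγ.1
  have cc := line_cont hc.1
  have cc' := line_cont hc'.1
  have hρ := L.rc
  -- crossing a line gives the endpoint of that line
  have cross : ∀ d : ℝ → X, Vert b d → (∀ s, b (d s) = b (c 0) + s) →
      (∃ j ∈ Icc 0 k, ρ (γ j) - ρ (d (t + j)) = 0) →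
      b (d (t + k)) = b m + k ∧ dist m (d (t + k)) ≤ k := by
    rintro d hd hd2 ⟨j, ⟨hj0, hjk⟩, hj⟩
    refine ⟨by rw [hd2, hm, e1 t]; ring, ?_⟩
    have e : γ j = d (t + j) := by
      have := L.lev (γ j) (d (t + j)) (by rw [e3, hd2]; ring)
      rw [hj, abs_zero] at this
      exact dist_eq_zero.1 this
    have h1 := dist_triangle m (γ j) (d (t + k))
    have h2 : dist m (γ j) = j := by
      rw [← γ0, hγ.1, zero_sub, abs_neg, abs_of_nonneg hj0]
    have h3 : dist (γ j) (d (t + k)) = k - j := by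
      rw [e, hd.1, abs_of_nonpos (by linarith)]; ring
    linarith
  by_cases f1 : ρ (γ k) < ρ (c (t + k))
  · have := cross c hc e1 (by
      have hcont : ContinuousOn (fun j => ρ (γ j) - ρ (c (t + j))) (Icc 0 k) := by
        apply Continuous.continuousOn; fun_prop
      have := intermediate_value_Icc' hk hcont
      obtain ⟨j, hj, hj'⟩ := this (show (0:ℝ) ∈ _ from
        ⟨by linarith, by simp only [γ0, add_zero]; linarith⟩)
      exact ⟨j, hj, hj'⟩)
    exact ⟨_, this.1, this.2, by rw [dist_self, zero_add]⟩
  by_cases f2 : ρ (c' (t + k)) < ρ (γ k)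
  · have := cross c' hc' e2 (by
      have hcont : ContinuousOn (fun j => ρ (γ j) - ρ (c' (t + j))) (Icc 0 k) := by
        apply Continuous.continuousOn; fun_prop
      have := intermediate_value_Icc hk hcont
      obtain ⟨j, hj, hj'⟩ := this (show (0:ℝ) ∈ _ from
        ⟨by simp only [γ0, add_zero]; linarith, by linarith⟩)
      exact ⟨j, hj, hj'⟩)
    exact ⟨_, this.1, this.2, by rw [dist_self, add_zero]⟩
  refine ⟨γ k, by rw [hγ.2, γ0], by rw [← γ0, hγ.1, zero_sub, abs_neg, abs_of_nonneg hk], ?_⟩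
  rw [L.lev (c (t + k)) (γ k) (by rw [e1, e3]; ring),
    L.lev (γ k) (c' (t + k)) (by rw [e2, e3]; ring),
    L.lev (c (t + k)) (c' (t + k)) (by rw [e1, e2]),
    abs_of_nonpos (by linarith), abs_of_nonpos (by linarith), abs_of_nonpos (by linarith)]
  ring

lemma Lev.push (L : Lev b ρ) {c c' : ℝ → X} (hc : Vert b c) (hc' : Vert b c')
    (h0 : b (c 0) = b (c' 0)) {t k : ℝ} (hk : 0 ≤ k) {m : X}
    (hm1 : dist (c t) m = dist (c t) (c' t) / 2) (hm2 : dist m (c' t) = dist (c t) (c' t) / 2) :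
    ∃ m', b m' = b m + k ∧ dist m m' ≤ k ∧
      dist (c (t + k)) m' + dist m' (c' (t + k)) = dist (c (t + k)) (c' (t + k)) := by
  have e12 : b (c t) = b (c' t) := by rw [hc.2, hc'.2, h0]
  have hm : b m = b (c t) := L.level _ _ _ (by unfold Btw; linarith) e12
  have d1 := L.lev (c t) m hm.symm
  have d2 := L.lev m (c' t) (hm.trans e12)
  have d3 := L.lev (c t) (c' t) e12
  rw [hm1] at d1
  rw [hm2] at d2
  rw [d3] at d1 d2
  rcases le_total (ρ (c t)) (ρ (c' t)) with h | h
  · rw [abs_of_nonpos (by linarith)] at d1 d2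
    apply L.push_aux hc hc' h0 hk hm
    · rcases abs_cases (ρ m - ρ (c' t)) with g | g <;> linarith [g.1, g.2]
    · rcases abs_cases (ρ (c t) - ρ m) with g | g <;> linarith [g.1, g.2]
  · rw [abs_of_nonneg (by linarith)] at d1 d2
    obtain ⟨m', a1, a2, a3⟩ := L.push_aux hc' hc h0.symm hk (hm.trans e12) (t := t)
      (by rcases abs_cases (ρ (c t) - ρ m) with g | g <;> linarith [g.1, g.2])
      (by rcases abs_cases (ρ m - ρ (c' t)) with g | g <;> linarith [g.1, g.2])
    refine ⟨m', a1, a2, ?_⟩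
    rw [dist_comm _ m', dist_comm m', dist_comm (c (t + k)) (c' (t + k))]
    rw [dist_comm (c' (t + k)) m'] at *
    rw [dist_comm m' (c (t + k))] at *
    linarith

lemma alg_aux {A B v v' k : ℝ} (hv : 0 < v) (hv' : 0 ≤ v')
    (h1 : A * B ≤ k ^ 2 + v * v') (h2 : |A - B| ≤ 2 * k) : A + B ≤ v + v' + 4 * k ^ 2 / v := by
  have h3 : (A - B) ^ 2 ≤ (2 * k) ^ 2 := sq_le_sq' (by linarith [(abs_le.1 h2).1]) (abs_le.1 h2).2
  have e : 4 * k ^ 2 / v * v = 4 * k ^ 2 := by field_simp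
  have hpos : 0 ≤ 4 * k ^ 2 / v := by positivity
  set E := 4 * k ^ 2 / v
  apply le_of_sq_le_sq _ (by positivity)
  nlinarith [mul_nonneg hv' hpos, sq_nonneg (v - v'), sq_nonneg E]

lemma alg_end {a t k E : ℝ} (ht : 0 < t) (hk : 0 < k) (ha : 0 < a)
    (h1 : a * (t + k) ≤ t * E) (h2 : E ≤ a + 20 * (k ^ 2 / a)) : a ^ 2 ≤ 20 * t * k := by
  have h5 := mul_le_mul_of_nonneg_left h2 ht.le
  have h6 : a * k ≤ 20 * t * (k ^ 2 / a) := by linarith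
  have h7 : a * k * a ≤ 20 * t * (k ^ 2 / a) * a := mul_le_mul_of_nonneg_right h6 ha.le
  have e9 : 20 * t * (k ^ 2 / a) * a = 20 * t * k ^ 2 := by field_simp
  rw [e9] at h7
  have h8 : k * a ^ 2 ≤ k * (20 * t * k) := by linarith
  exact le_of_mul_le_mul_left h8 hk

lemma Lev.ineq (hPT : Ptolemaic X) (hgeo : GeodesicMetricSpace X) (L : Lev b ρ) {c c' : ℝ → X}
    (hc : Vert b c) (hc' : Vert b c') (h0 : c 0 = c' 0) {t k : ℝ} (ht : 0 < t) (hk : 0 < k)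
    (ha : 0 < dist (c t) (c' t))
    (hmax : dist (c (t + k)) (c' (t + k)) + dist (c (t - k)) (c' (t - k)) ≤
      2 * dist (c t) (c' t)) : dist (c t) (c' t) ^ 2 ≤ 20 * t * k := by
  obtain ⟨m, hm1, hm2⟩ := exists_mid hgeo (c t) (c' t)
  have e12 : b (c t) = b (c' t) := by rw [hc.2, hc'.2, h0]
  have hm : b m = b (c t) := L.level _ _ _ (by unfold Btw; linarith) e12
  obtain ⟨m', b1, b2, b3⟩ := L.push hc hc' (by rw [h0]) hk.le hm1 hm2
  have hxm : t + k ≤ dist (c 0) m' := by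
    have := L.lip m' (c 0)
    rw [b1, hm, hc.2, dist_comm] at this; linarith
  have lc : ∀ s r, dist (c s) (c r) = |s - r| := hc.1
  have lc' : ∀ s r, dist (c' s) (c' r) = |s - r| := hc'.1
  have k1 : dist (c t) (c (t + k)) = k := by
    rw [lc, abs_of_nonpos (by linarith)]; ring
  have k2 : dist (c' t) (c' (t + k)) = k := by
    rw [lc', abs_of_nonpos (by linarith)]; ring
  have k3 : dist (c t) (c (t - k)) = k := by
    rw [lc, abs_of_nonneg (by linarith)]; ring
  have k4 : dist (c' t) (c' (t - k)) = k := by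
    rw [lc', abs_of_nonneg (by linarith)]; ring
  have x1 : dist (c t) (c 0) = t := by rw [lc, abs_of_nonneg (by linarith)]; ring
  have x2 : dist (c' t) (c 0) = t := by rw [h0, lc', abs_of_nonneg (by linarith)]; ring
  -- names
  set p := c t with hp
  set p' := c' t with hp'
  set P := c (t + k) with hP
  set P' := c' (t + k) with hP'
  set Q := c (t - k) with hQ
  set Q' := c' (t - k) with hQ'
  set a := dist p p' with had
  have I1 := hPT p p' (c 0) m'
  rw [x1, x2] at I1
  have I1' : a * (t + k) ≤ t * (dist p m' + dist p' m') := by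
    have := mul_le_mul_of_nonneg_left hxm ha.le
    linarith
  have hv : 0 < a / 2 := by linarith
  have I2 : dist p m' + dist m P ≤ a / 2 + dist P m' + 4 * k ^ 2 / (a / 2) := by
    apply alg_aux hv dist_nonneg
    · have := hPT p m' m P
      rw [hm1, k1, dist_comm m' P, dist_comm m' m] at this
      have := mul_le_mul_of_nonneg_left b2 hk.le
      linarith
    · rw [abs_le]
      have t1 := dist_triangle4 p P m m'
      have t2 := dist_triangle4 m m' p P
      rw [dist_comm P m] at t1
      rw [dist_comm m' p] at t2
      constructor <;> linarith
  have I3 : dist p' m' + dist m P' ≤ a / 2 + dist m' P' + 4 * k ^ 2 / (a / 2) := by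
    apply alg_aux hv dist_nonneg
    · have := hPT p' m' m P'
      rw [dist_comm p' m, hm2, k2, dist_comm m' m] at this
      have := mul_le_mul_of_nonneg_left b2 hk.le
      linarith
    · rw [abs_le]
      have t1 := dist_triangle4 p' P' m m'
      have t2 := dist_triangle4 m m' p' P'
      rw [dist_comm P' m] at t1
      rw [dist_comm m' p'] at t2
      constructor <;> linarith
  have I4 : dist p Q' + dist p' Q ≤ a + dist Q Q' + 4 * k ^ 2 / a := by
    apply alg_aux ha dist_nonneg
    · have := hPT p Q' p' Q
      rw [k3, dist_comm Q' Q, dist_comm Q' p', k4] at this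
      linarith
    · rw [abs_le]
      have t1 := dist_triangle4 p Q p' Q'
      have t2 := dist_triangle4 p' Q' p Q
      rw [dist_comm Q p'] at t1
      rw [dist_comm Q' p] at t2
      constructor <;> linarith
  have C1 : 2 * a ≤ dist p Q' + dist p P' := by
    have := bcvx_dist hPT p Q' p' P' (line_btw hc'.1 (by linarith) (by linarith))
    have e : dist Q' P' = 2 * k := by
      rw [hQ', hP', lc', abs_of_nonpos (by linarith)]; ring
    rw [e, k2, dist_comm Q' p', k4] at this
    simp only at this
    rw [dist_comm p' p, dist_comm Q' p, dist_comm P' p] at this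
    have h : k * (2 * a) ≤ k * (dist p Q' + dist p P') := by linarith
    exact le_of_mul_le_mul_left h hk
  have C2 : 2 * a ≤ dist p' Q + dist p' P := by
    have := bcvx_dist hPT p' Q p P (line_btw hc.1 (by linarith) (by linarith))
    have e : dist Q P = 2 * k := by
      rw [hQ, hP, lc, abs_of_nonpos (by linarith)]; ring
    rw [e, k1, dist_comm Q p, k3] at this
    simp only at this
    rw [dist_comm Q p', dist_comm P p'] at this
    have h : k * (2 * a) ≤ k * (dist p' Q + dist p' P) := by linarith
    exact le_of_mul_le_mul_left h hk
  have T1 := dist_triangle p' m P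
  rw [dist_comm p' m, hm2] at T1
  have T2 := dist_triangle p m P'
  rw [hm1] at T2
  have e8 : 4 * k ^ 2 / (a / 2) = 8 * (k ^ 2 / a) := by field_simp; norm_num
  have e4 : 4 * k ^ 2 / a = 4 * (k ^ 2 / a) := by ring
  rw [e8] at I2 I3
  rw [e4] at I4
  have hsum : dist p m' + dist p' m' ≤ a + 20 * (k ^ 2 / a) := by linarith
  exact alg_end ht hk ha I1' hsum

lemma Lev.uniq_pos (hPT : Ptolemaic X) (hgeo : GeodesicMetricSpace X) (L : Lev b ρ)
    {c c' : ℝ → X} (hc : Vert b c) (hc' : Vert b c') (h0 : c 0 = c' 0)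
    (hl : Tendsto (fun s => dist (c s) (c' s) / |s|) atTop (𝓝 0)) {u : ℝ} (hu : 0 < u) :
    c u = c' u := by
  by_contra hne
  have hau : 0 < dist (c u) (c' u) := dist_pos.2 hne
  set κ := dist (c u) (c' u) / (2 * u) with hκ
  have hκ0 : 0 < κ := by positivity
  obtain ⟨U, hU⟩ := eventually_atTop.1 (hl.eventually_lt_const hκ0)
  have hcont : Continuous (fun s => dist (c s) (c' s) - κ * s) := by
    have := line_cont hc.1
    have := line_cont hc'.1
    fun_prop
  obtain ⟨t, ht, hmax⟩ := (isCompact_Icc (a := (0:ℝ)) (b := max U u)).exists_isMaxOn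
    ⟨0, le_rfl, le_max_of_le_right hu.le⟩ hcont.continuousOn
  have hφu : dist (c u) (c' u) - κ * u = dist (c u) (c' u) / 2 := by
    rw [hκ]; field_simp; ring
  have hφt : dist (c u) (c' u) / 2 ≤ dist (c t) (c' t) - κ * t := by
    rw [← hφu]
    exact hmax (show u ∈ Icc 0 (max U u) from ⟨hu.le, le_max_right _ _⟩)
  have hall : ∀ s, 0 ≤ s → dist (c s) (c' s) - κ * s ≤ dist (c t) (c' t) - κ * t := by
    intro s hs
    by_cases h : s ≤ max U u
    · exact hmax (show s ∈ Icc 0 (max U u) from ⟨hs, h⟩)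
    · push Not at h
      have h1 := hU s ((le_max_left _ _).trans h.le)
      have hs0 : 0 < s := hu.trans_le ((le_max_right _ _).trans h.le)
      rw [abs_of_pos hs0, div_lt_iff₀ hs0] at h1
      linarith
  have ht0 : 0 < t := by
    rcases ht.1.lt_or_eq with h | h
    · exact h
    · rw [← h, h0, dist_self] at hφt; linarith
  have hat : 0 < dist (c t) (c' t) := by nlinarith [mul_pos hκ0 ht0]
  set a := dist (c t) (c' t) with ha
  set k := min t (a ^ 2 / (40 * t)) with hk
  have hk0 : 0 < k := lt_min ht0 (by positivity)
  have hkt : k ≤ t := min_le_left _ _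
  have hka : k ≤ a ^ 2 / (40 * t) := min_le_right _ _
  have key := L.ineq hPT hgeo hc hc' h0 ht0 hk0 hat (by
    have h1 := hall (t + k) (by linarith)
    have h2 := hall (t - k) (by linarith)
    linarith)
  rw [le_div_iff₀ (by positivity)] at hka
  have : 0 < a ^ 2 := by positivity
  nlinarith

lemma Lev.uniq (hPT : Ptolemaic X) (hgeo : GeodesicMetricSpace X) (L : Lev b ρ)
    {c c' : ℝ → X} (hc : Vert b c) (hc' : Vert b c') (h0 : c 0 = c' 0)
    (hp : ParallelLines c c') : c = c' := by
  funext u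
  rcases lt_trichotomy u 0 with h | h | h
  · have := L.neg.uniq_pos hPT hgeo (vert_rev hc) (vert_rev hc') (by simp [rev, h0])
      (par_rev hp).1 (u := -u) (by linarith)
    simpa [rev] using this
  · rw [h, h0]
  · exact L.uniq_pos hPT hgeo hc hc' h0 hp.1 h

end uniq

section final
variable {X : Type*} [MetricSpace X] {p q : X → ℝ} {c₀ c₁ : ℝ → X}

lemma Strip.levels [ProperSpace X] (S : Strip p q c₀ c₁) (u : ℝ) :
    ∃ (D : ℝ) (σ : ℝ → X), D = dist (c₀ u) (c₁ (u - bus (rev c₀) (c₁ 0))) ∧ σ 0 = c₀ u ∧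
      (∀ s ∈ Icc (0:ℝ) 1, ∀ t ∈ Icc (0:ℝ) 1, dist (σ s) (σ t) = D * |s - t|) ∧
      ∀ y, bus (rev c₀) y = u → ∃ t ∈ Icc (0:ℝ) 1, y = σ t := by
  obtain ⟨σ, σc, σ0, σ1, σb, σd⟩ := geo_cont S.hgeo (c₀ u) (c₁ (u - bus (rev c₀) (c₁ 0)))
  refine ⟨_, σ, rfl, σ0, σd, fun y hy => ?_⟩
  have hl : ∀ t, bus (rev c₀) (σ t) = u := fun t => by
    rw [S.level (σb t) (by rw [S.bm0, bus_rev_parallel S.hPT S.h0 S.h1 S.par]; ring), S.bm0]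
  obtain ⟨t, ht⟩ := S.slice (y := y) (σ := fun t => σ (projIcc (0:ℝ) 1 zero_le_one t))
    (σc.comp (continuous_subtype_val.comp continuous_projIcc))
    (by simpa [projIcc] using σ0) (by simpa [projIcc] using σ1)
    (fun t => by rw [hl, hy])
  exact ⟨_, (projIcc (0:ℝ) 1 zero_le_one t).2, ht⟩

lemma Strip.toLev [ProperSpace X] (S : Strip p q c₀ c₁) :
    Lev (bus (rev c₀)) (fun y => dist (c₀ (bus (rev c₀) y)) y) where
  lip := bus_lip (line_rev S.h0)
  rc := by
    have h1 := bus_cont (line_rev S.h0)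
    have h2 := line_cont S.h0
    fun_prop
  vert := S.exists_vert
  lev := by
    intro x y hxy
    obtain ⟨D, σ, hD, σ0, σd, hσ⟩ := S.levels (bus (rev c₀) x)
    have hD0 : 0 ≤ D := by rw [hD]; exact dist_nonneg
    obtain ⟨s, hs, rfl⟩ := hσ x rfl
    obtain ⟨t, ht, rfl⟩ := hσ y hxy.symm
    rw [← hxy, ← σ0, σd s hs t ht, σd 0 (by simp) s hs, σd 0 (by simp) t ht, zero_sub, abs_neg,
      zero_sub, abs_neg, abs_of_nonneg hs.1, abs_of_nonneg ht.1, ← mul_sub, abs_mul,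
      abs_of_nonneg hD0]
  level := fun x z y hb h => S.level hb h

lemma Strip.width [ProperSpace X] (S : Strip p q c₀ c₁) (y : X) :
    dist (c₀ (bus (rev c₀) y)) y ≤
      dist (c₀ (bus (rev c₀) y)) (c₁ (bus (rev c₀) y - bus (rev c₀) (c₁ 0))) := by
  obtain ⟨D, σ, hD, σ0, σd, hσ⟩ := S.levels (bus (rev c₀) y)
  obtain ⟨t, ht, h⟩ := hσ y rfl
  rw [← hD]
  have hD0 : 0 ≤ D := by rw [hD]; exact dist_nonneg
  have e : dist (c₀ (bus (rev c₀) y)) y = D * t := by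
    calc dist (c₀ (bus (rev c₀) y)) y = dist (σ 0) (σ t) := by rw [σ0, ← h]
      _ = D * t := by
        rw [σd 0 (by simp) t ht, zero_sub, abs_neg, abs_of_nonneg ht.1]
  rw [e]
  nlinarith [ht.2]

lemma par_of_bound {c d e : ℝ → X} (h : ParallelLines c d) {C : ℝ}
    (hb : ∀ s, dist (e s) (c s) ≤ dist (c s) (d s) + C) : ParallelLines e c := by
  have hC : ∀ l : Filter ℝ, Tendsto (fun s : ℝ => |s|) l atTop →
      Tendsto (fun t => dist (c t) (d t) / |t|) l (𝓝 0) →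
      Tendsto (fun t => dist (e t) (c t) / |t|) l (𝓝 0) := by
    intro l hl h1
    have h2 : Tendsto (fun s : ℝ => C / |s|) l (𝓝 0) := tendsto_const_nhds.div_atTop hl
    have h3 := h1.add h2
    rw [add_zero] at h3
    refine squeeze_zero (fun t => by positivity) (fun t => ?_) h3
    rw [← add_div]
    exact div_le_div_of_nonneg_right (hb t) (abs_nonneg _)
  exact ⟨hC _ tendsto_abs_atTop_atTop h.1, hC _ tendsto_abs_atBot_atTop h.2⟩

lemma par_trans {c d e : ℝ → X} (h : ParallelLines c d) (h' : ParallelLines d e) :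
    ParallelLines c e := by
  constructor
  · have h3 := h.1.add h'.1
    rw [add_zero] at h3
    refine squeeze_zero (fun t => by positivity) (fun t => ?_) h3
    rw [← add_div]
    exact div_le_div_of_nonneg_right (dist_triangle _ _ _) (abs_nonneg _)
  · have h3 := h.2.add h'.2
    rw [add_zero] at h3
    refine squeeze_zero (fun t => by positivity) (fun t => ?_) h3
    rw [← add_div]
    exact div_le_div_of_nonneg_right (dist_triangle _ _ _) (abs_nonneg _)

lemma Strip.main [ProperSpace X] (S : Strip p q c₀ c₁) (x : X) : ∃! cx : ℝ → X,
      IsGeodesicLine cx ∧ cx 0 = x ∧ ParallelLines cx c₀ := by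
  have vert : ∀ c : ℝ → X, IsGeodesicLine c → ParallelLines c c₀ → Vert (bus (rev c₀)) c :=
    fun c hc hp => ⟨hc, bus_rev_parallel S.hPT S.h0 hc (par_symm hp)⟩
  obtain ⟨γ, γ0, hγ⟩ := S.exists_vert x
  have hpar : ParallelLines γ c₀ := by
    apply par_of_bound S.par (C := |bus (rev c₀) x| + (|bus (rev c₀) x| + |bus (rev c₀) x -
      bus (rev c₀) (c₁ 0)|))
    intro s
    have hb : bus (rev c₀) (γ s) = bus (rev c₀) x + s := by rw [hγ.2, γ0]
    have h1 := S.width (γ s)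
    rw [hb] at h1
    set β := bus (rev c₀) x
    set β1 := bus (rev c₀) (c₁ 0)
    have d1 : dist (c₀ (β + s)) (c₀ s) = |β| := by rw [S.h0]; congr 1; ring
    have d2 : dist (c₁ s) (c₁ (β + s - β1)) = |β - β1| := by
      rw [S.h1, abs_sub_comm]; congr 1; ring
    have t1 := dist_triangle (γ s) (c₀ (β + s)) (c₀ s)
    have t2 := dist_triangle4 (c₀ (β + s)) (c₀ s) (c₁ s) (c₁ (β + s - β1))
    rw [dist_comm (γ s) (c₀ (β + s))] at t1
    linarith
  refine ⟨γ, ⟨hγ.1, γ0, hpar⟩, ?_⟩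
  rintro c ⟨hc, hc0, hcp⟩
  exact S.toLev.uniq S.hPT S.hgeo (vert c hc hcp) hγ (by rw [hc0, γ0])
    (par_trans hcp (par_symm hpar))

end final
end PTS

theorem unique_parallel_line_through_point
    (X : Type*) [MetricSpace X] [ProperSpace X]
    (hPT : Ptolemaic X) (hgeo : GeodesicMetricSpace X)
    (h : (ℝ × (Set.Icc (0:ℝ) 1)) ≃ₜ X)
    (c₀ c₁ : ℝ → X)
    (hc₀ : IsGeodesicLine c₀) (hc₁ : IsGeodesicLine c₁)
    (hpar : ParallelLines c₀ c₁)
    (him₀ : Set.range c₀ = ⇑h '' {p : ℝ × (Set.Icc (0:ℝ) 1) | (p.2 : ℝ) = 0})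
    (him₁ : Set.range c₁ = ⇑h '' {p : ℝ × (Set.Icc (0:ℝ) 1) | (p.2 : ℝ) = 1}) :
    ∀ x : X, ∃! cx : ℝ → X,
      IsGeodesicLine cx ∧ cx 0 = x ∧ ParallelLines cx c₀ := by
  have S : PTS.Strip (fun y => (h.symm y).1) (fun y => ((h.symm y).2 : ℝ)) c₀ c₁ :=
    { hPT := hPT
      hgeo := hgeo
      h0 := hc₀
      h1 := hc₁
      par := hpar
      pc := continuous_fst.comp h.symm.continuous
      qc := continuous_subtype_val.comp (continuous_snd.comp h.symm.continuous)
      q0 := fun y => (h.symm y).2.2.1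
      q1 := fun y => (h.symm y).2.2.2
      inj := fun y z h1 h2 => h.symm.injective (Prod.ext h1 (Subtype.ext h2))
      comp := fun M => by
        have hk : IsCompact (h '' (Icc (-M) M ×ˢ (univ : Set (Icc (0:ℝ) 1)))) :=
          (isCompact_Icc.prod isCompact_univ).image h.continuous
        convert hk using 1
        ext y
        constructor
        · intro hy
          exact ⟨h.symm y, ⟨abs_le.1 hy, mem_univ _⟩, h.apply_symm_apply y⟩
        · rintro ⟨z, hz, rfl⟩
          show |(h.symm (h z)).1| ≤ M
          rw [h.symm_apply_apply]
          exact abs_le.2 hz.1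
      m0 := fun s => by
        have : c₀ s ∈ range c₀ := ⟨s, rfl⟩
        rw [him₀] at this
        obtain ⟨z, hz, hz'⟩ := this
        rw [← hz', h.symm_apply_apply]
        exact hz
      m1 := fun s => by
        have : c₁ s ∈ range c₁ := ⟨s, rfl⟩
        rw [him₁] at this
        obtain ⟨z, hz, hz'⟩ := this
        rw [← hz', h.symm_apply_apply]
        exact hz
      surj := fun a => by
        have : h (a, ⟨0, by simp⟩) ∈ range c₀ := by
          rw [him₀]
          exact ⟨_, rfl, rfl⟩
        obtain ⟨s, hs⟩ := this
        exact ⟨s, by rw [hs, h.symm_apply_apply]⟩ }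
  exact S.main
end
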